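/- arXiv:2302.04159 — 3 statements merged into one kernel-verified Lean document; each statement's English description precedes it below -/
import Mathlib

section
/- For a simple closed polygon P in the Euclidean plane with interior angles ∠V₁, …, ∠Vₙ (traversed counterclockwise), the polygon density den(P) = (1/2π)·Σᵢ(π − ∠Vᵢ) equals 1. -/
open Real

/-
Cut the polygon open at an interior point `p` of an edge. The secants of the resulting simple path
turn continuously (Hopf's Umlaufsatz, in discrete form), so the sum of the exterior angles is twice
the angle that the rest of the polygon sweeps as seen from `p`. That angle is found by counting
crossings with the horizontal line through `p`: for every edge `e` crossing a generic horizontal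
line with sign `u e = ±1`, the sum of the exterior angles is `-2π (u e + 2 L)`, where `L` is the
number of crossings to the left of `e`, counted with sign.

Hence `u e + 2 L` has the same value at all crossings of the line, namely the sign `±1` of the
leftmost one. If it were `1`, then all partial sums of the signs, from left to right, would be
nonnegative, and Abel summation would give `∑ u e * x e ≤ 0` for the abscissas `x e` of the
crossings. But the integral of this sum over all heights is the signed area, which is positive, so
on some horizontal line the value is `-1` and the exterior angles add up to `2π`.
-/

section Arguments

open Complex

theorem arg_div_eq_sub {a b : ℂ} (ha : a ∈ slitPlane) (hb : b ≠ 0)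
    (h : arg b - arg a ∈ Set.Ioc (-π) π) : arg (b / a) = arg b - arg a := by
  obtain ⟨harg, ha0⟩ := mem_slitPlane_iff_arg.1 ha
  have hinv : arg a⁻¹ = -arg a := by rw [arg_inv, if_neg harg]
  rw [sub_eq_add_neg, ← hinv] at h ⊢
  rw [div_eq_mul_inv, arg_mul hb (inv_ne_zero ha0) h]

theorem arg_div_of_re_mul_pos {a b c : ℂ} (ha : 0 < (a * c).re) (hb : 0 < (b * c).re) :
    arg (b / a) = arg (b * c) - arg (a * c) := by
  have hc : c ≠ 0 := by rintro rfl; simp at ha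
  have hb0 : b * c ≠ 0 := fun h => by simp [h] at hb
  have ha' := abs_lt.1 (abs_arg_lt_pi_div_two_iff.2 (.inl ha))
  have hb' := abs_lt.1 (abs_arg_lt_pi_div_two_iff.2 (.inl hb))
  rw [← mul_div_mul_right b a hc, arg_div_eq_sub (.inl ha) hb0]
  constructor <;> linarith

theorem arg_div_of_im_mul_im_pos {a b : ℂ} (h : 0 < a.im * b.im) :
    arg (b / a) = arg b - arg a := by
  have ha : a.im ≠ 0 := (mul_ne_zero_iff.1 h.ne').1
  have hb : b.im ≠ 0 := (mul_ne_zero_iff.1 h.ne').2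
  have hb0 : b ≠ 0 := by rintro rfl; simp at hb
  refine arg_div_eq_sub (.inr ha) hb0 ?_
  have hb_le := arg_le_pi b
  rcases pos_and_pos_or_neg_and_neg_of_mul_pos h with ⟨hai, hbi⟩ | ⟨hai, hbi⟩
  · have ha_lt : arg a < π := arg_lt_pi_iff.2 (.inr ha)
    have ha_nonneg := arg_nonneg_iff.2 hai.le
    have hb_nonneg := arg_nonneg_iff.2 hbi.le
    constructor <;> linarith
  · have ha_neg := arg_neg_iff.2 hai
    have hb_neg := arg_neg_iff.2 hbi
    have ha_gt := neg_pi_lt_arg a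
    have hb_gt := neg_pi_lt_arg b
    constructor <;> linarith

theorem arg_ofReal_mul_div_ofReal_mul {r s : ℝ} (hr : 0 < r) (hs : 0 < s) (a b : ℂ) :
    arg (r * a / (s * b)) = arg (a / b) := by
  rw [mul_div_mul_comm, ← ofReal_div, arg_real_mul _ (div_pos hr hs)]

theorem exists_re_mul_pos_of_mem_slitPlane {z : ℂ} (hz : z ∈ slitPlane) :
    ∃ c : ℂ, 0 < c.re ∧ 0 < (z * c).re := by
  -- The conjugate of a square root of `z` rotates `1` and `z` symmetrically about the real axis.
  set s : ℂ := z ^ (2⁻¹ : ℂ) with hs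
  have hs_sq : s ^ 2 = z := cpow_ofNat_inv_pow z 2
  have hnorm : 0 < ‖z‖ + z.re := by
    rcases mem_slitPlane_iff.1 hz with h | h
    · positivity
    · linarith [(abs_lt.1 (abs_re_lt_norm.2 h)).1]
  have hre : 0 < s.re := by rw [hs, cpow_inv_two_re]; positivity
  have hs0 : s ≠ 0 := fun h => by simp [h] at hre
  have hmul : z * starRingEnd ℂ s = (normSq s : ℝ) * s := by rw [← hs_sq, ← mul_conj]; ring
  refine ⟨starRingEnd ℂ s, hre, ?_⟩
  rw [hmul, re_ofReal_mul]
  exact mul_pos (normSq_pos.2 hs0) hre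

theorem arg_add_div_add_arg_div_add {a b : ℂ} (h : b / a ∈ slitPlane) :
    arg ((a + b) / a) + arg (b / (a + b)) = arg (b / a) := by
  have ha0 : a ≠ 0 := by rintro rfl; simp at h
  obtain ⟨c, hc, hbc⟩ := exists_re_mul_pos_of_mem_slitPlane h
  have ha : 0 < (a * (c / a)).re := by rwa [mul_div_cancel₀ c ha0]
  have hb : 0 < (b * (c / a)).re := by rwa [← mul_div_assoc, mul_div_right_comm]
  have hab : 0 < ((a + b) * (c / a)).re := by rw [add_mul, add_re]; exact add_pos ha hb
  rw [arg_div_of_re_mul_pos ha hab, arg_div_of_re_mul_pos hab hb, arg_div_of_re_mul_pos ha hb]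
  ring

theorem arg_div_of_add_eq_ofReal {a b : ℂ} {r : ℝ} (ha : a.im ≠ 0) (hr : 0 < r)
    (h : a + b = r) : arg (b / a) = arg b - arg a := by
  have ha0 : a ≠ 0 := by rintro rfl; simp at ha
  have hslit : b / a ∈ slitPlane := by
    rw [eq_sub_of_add_eq' h, sub_div, div_self ha0, mem_slitPlane_iff]
    right
    simp [div_im, hr.ne', ha, ha0]
  have hinv : arg a⁻¹ = -arg a := by rw [arg_inv, if_neg fun h => ha (arg_eq_pi_iff.1 h).2]
  rw [← arg_add_div_add_arg_div_add hslit, h, div_eq_mul_inv, arg_real_mul _ hr, hinv,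
    div_eq_mul_inv, ← ofReal_inv, arg_mul_real (inv_pos.2 hr)]
  ring

theorem arg_div_of_sbtw_pos {a b : ℂ} {r : ℝ} (ha : a.im ≠ 0) (hr : 0 < r)
    (h : Sbtw ℝ a r b) : arg (b / a) = arg b - arg a := by
  obtain ⟨⟨t, ⟨ht0, ht1⟩, hline⟩, -⟩ := sbtw_iff_mem_image_Ioo_and_ne.1 h
  have ht1' : 0 < 1 - t := sub_pos.2 ht1
  have hsum : ((1 - t : ℝ) : ℂ) * a + (t : ℂ) * b = r := by
    rw [← hline, AffineMap.lineMap_apply_module, real_smul, real_smul]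
  have him : (((1 - t : ℝ) : ℂ) * a).im ≠ 0 := by
    rw [im_ofReal_mul]; exact mul_ne_zero ht1'.ne' ha
  have key := arg_div_of_add_eq_ofReal him hr hsum
  rwa [arg_ofReal_mul_div_ofReal_mul ht0 ht1', arg_real_mul _ ht0, arg_real_mul _ ht1'] at key

theorem arg_div_of_sbtw_neg {a b : ℂ} {r : ℝ} (ha : a.im ≠ 0) (hr : r < 0)
    (h : Sbtw ℝ a r b) : arg (b / a) = arg (-b) - arg (-a) := by
  have hneg : Sbtw ℝ (-a) ((-r : ℝ) : ℂ) (-b) := by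
    rw [ofReal_neg, ← zero_sub, ← zero_sub (r : ℂ), ← zero_sub b]
    exact (sbtw_const_sub_iff 0).2 h
  rw [← neg_div_neg_eq, arg_div_of_sbtw_pos (by simpa using ha) (neg_pos.2 hr) hneg]

end Arguments

section Angles

/-- The signed angle, in `(-π, π]`, under which the segment from `a` to `b` is seen from `p`. -/
noncomputable def viewAngle (p a b : ℂ) : ℝ := Complex.arg ((b - p) / (a - p))

/-- The signed exterior angle, in `(-π, π]`, at `b` of a path from `a` through `b` to `c`. -/
noncomputable def turnAngle (a b c : ℂ) : ℝ := Complex.arg ((c - b) / (b - a))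

theorem exists_re_mul_pos_of_disjoint_segment {a b c d : ℂ}
    (h : Disjoint (segment ℝ a b) (segment ℝ c d)) :
    ∃ w : ℂ, 0 < ((c - a) * w).re ∧ 0 < ((d - a) * w).re ∧ 0 < ((c - b) * w).re ∧
      0 < ((d - b) * w).re := by
  have hcompact (x y : ℂ) : IsCompact (segment ℝ x y) := by
    rw [← convexHull_pair]; exact (Set.toFinite _).isCompact_convexHull ℝ
  obtain ⟨f, u, v, hu, huv, hv⟩ := geometric_hahn_banach_compact_closed (convex_segment a b)
    (hcompact a b) (convex_segment c d) (hcompact c d).isClosed h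
  refine ⟨starRingEnd ℂ ((InnerProductSpace.toDual ℝ ℂ).symm f), ?_⟩
  simp only [← Complex.inner, InnerProductSpace.toDual_symm_apply, map_sub, sub_pos]
  have ha := (hu a (left_mem_segment ℝ a b)).trans huv
  have hb := (hu b (right_mem_segment ℝ a b)).trans huv
  have hc := hv c (left_mem_segment ℝ c d)
  have hd := hv d (right_mem_segment ℝ c d)
  exact ⟨ha.trans hc, ha.trans hd, hb.trans hc, hb.trans hd⟩

theorem viewAngle_add_viewAngle_of_disjoint_segment {a b c d : ℂ}
    (h : Disjoint (segment ℝ a b) (segment ℝ c d)) :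
    viewAngle a c d + viewAngle d a b = viewAngle c a b + viewAngle b c d := by
  obtain ⟨w, hca, hda, hcb, hdb⟩ := exists_re_mul_pos_of_disjoint_segment h
  have hswap (p : ℂ) : viewAngle p a b = Complex.arg ((p - b) / (p - a)) := by
    rw [viewAngle, ← neg_div_neg_eq, neg_sub, neg_sub]
  rw [hswap, hswap, viewAngle, viewAngle, arg_div_of_re_mul_pos hca hda,
    arg_div_of_re_mul_pos hda hdb, arg_div_of_re_mul_pos hca hcb, arg_div_of_re_mul_pos hcb hdb]
  ring

theorem div_mem_slitPlane_of_segment_inter_subset {a b c : ℂ} (hab : a ≠ b) (hbc : b ≠ c)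
    (h : segment ℝ a b ∩ segment ℝ b c ⊆ {b}) : (c - b) / (b - a) ∈ Complex.slitPlane := by
  by_contra hslit
  rw [Complex.mem_slitPlane_iff, not_or, not_lt, not_not] at hslit
  have hray : SameRay ℝ (c - b) (a - b) := by
    rw [Complex.sameRay_iff_arg_div_eq_zero, Complex.arg_eq_zero_iff, ← neg_sub b a, div_neg,
      Complex.neg_re, Complex.neg_im]
    exact ⟨neg_nonneg.2 hslit.1, neg_eq_zero.2 hslit.2⟩
  rcases wbtw_total_of_sameRay_vsub_left (x := b) (y := c) (z := a) hray with hc | ha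
  · exact hbc (h ⟨mem_segment_iff_wbtw.2 hc.symm, right_mem_segment ℝ b c⟩).symm
  · exact hab (h ⟨left_mem_segment ℝ a b, mem_segment_iff_wbtw.2 ha⟩)

theorem viewAngle_add_viewAngle_eq_turnAngle {a b c : ℂ} (hab : a ≠ b) (hbc : b ≠ c)
    (h : segment ℝ a b ∩ segment ℝ b c ⊆ {b}) :
    viewAngle a b c + viewAngle c a b = turnAngle a b c := by
  have key := arg_add_div_add_arg_div_add (div_mem_slitPlane_of_segment_inter_subset hab hbc h)
  rwa [sub_add_sub_cancel', ← neg_div_neg_eq (c - b) (c - a), neg_sub, neg_sub] at key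

theorem viewAngle_eq_zero_of_wbtw_left {a p b : ℂ} (h : Wbtw ℝ a p b) : viewAngle a p b = 0 :=
  Complex.sameRay_iff_arg_div_eq_zero.1 h.sameRay_vsub_left.symm

theorem viewAngle_eq_zero_of_wbtw_right {a p b : ℂ} (h : Wbtw ℝ a p b) : viewAngle b a p = 0 :=
  Complex.sameRay_iff_arg_div_eq_zero.1 h.symm.sameRay_vsub_left

theorem turnAngle_of_sbtw_left {a p b : ℂ} (h : Sbtw ℝ a p b) (c : ℂ) :
    turnAngle p b c = turnAngle a b c := by
  obtain ⟨⟨t, ⟨-, ht1⟩, rfl⟩, -⟩ := sbtw_iff_mem_image_Ioo_and_ne.1 h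
  have hsub : b - AffineMap.lineMap a b t = ((1 - t : ℝ) : ℂ) * (b - a) := by
    rw [← Complex.real_smul]; exact AffineMap.right_vsub_lineMap a b t
  simpa [turnAngle, hsub] using
    arg_ofReal_mul_div_ofReal_mul one_pos (sub_pos.2 ht1) (c - b) (b - a)

theorem turnAngle_of_sbtw_right {b p c : ℂ} (h : Sbtw ℝ b p c) (a : ℂ) :
    turnAngle a b p = turnAngle a b c := by
  obtain ⟨⟨t, ⟨ht0, -⟩, rfl⟩, -⟩ := sbtw_iff_mem_image_Ioo_and_ne.1 h
  have hsub : AffineMap.lineMap b c t - b = (t : ℂ) * (c - b) := by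
    rw [← Complex.real_smul]; exact AffineMap.lineMap_vsub_left b c t
  rw [turnAngle, turnAngle, hsub, mul_div_assoc, Complex.arg_real_mul _ ht0]

end Angles

section Sweep

/-- The total signed angle swept by the line of sight from `p` along the path `W 0, …, W m`. -/
noncomputable def sweep (p : ℂ) (W : ℕ → ℂ) (m : ℕ) : ℝ :=
  ∑ j ∈ Finset.range m, viewAngle p (W j) (W (j + 1))

theorem sweep_succ (p : ℂ) (W : ℕ → ℂ) (m : ℕ) :
    sweep p W (m + 1) = sweep p W m + viewAngle p (W m) (W (m + 1)) :=
  Finset.sum_range_succ _ _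

theorem sweep_succ' (p : ℂ) (W : ℕ → ℂ) (m : ℕ) :
    sweep p W (m + 1) = sweep p (fun k => W (k + 1)) m + viewAngle p (W 0) (W 1) :=
  Finset.sum_range_succ' _ _

theorem sweep_add_viewAngle {a b : ℂ} {W : ℕ → ℂ} {m : ℕ}
    (h : ∀ j < m, Disjoint (segment ℝ a b) (segment ℝ (W j) (W (j + 1)))) :
    sweep a W m + viewAngle (W m) a b = viewAngle (W 0) a b + sweep b W m := by
  induction m with
  | zero => simp [sweep]
  | succ m ih =>
    have hstep := viewAngle_add_viewAngle_of_disjoint_segment (h m m.lt_succ_self)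
    rw [sweep_succ, sweep_succ]
    linarith [ih fun j hj => h j (hj.trans m.lt_succ_self)]

theorem sum_turnAngle_eq_sweep_add_sweep {W : ℕ → ℂ} {m : ℕ}
    (hne : ∀ i ≤ m, W i ≠ W (i + 1))
    (hadj : ∀ i < m,
      segment ℝ (W i) (W (i + 1)) ∩ segment ℝ (W (i + 1)) (W (i + 2)) ⊆ {W (i + 1)})
    (hdisj : ∀ i j, i + 1 < j → j ≤ m →
      Disjoint (segment ℝ (W i) (W (i + 1))) (segment ℝ (W j) (W (j + 1)))) :
    ∑ i ∈ Finset.range m, turnAngle (W i) (W (i + 1)) (W (i + 2)) =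
      sweep (W 0) (fun k => W (k + 1)) m + sweep (W (m + 1)) W m := by
  induction m with
  | zero => simp [sweep]
  | succ m ih =>
    have hprev := ih (fun i hi => hne i (by omega)) (fun i hi => hadj i (by omega))
      fun i j hij hj => hdisj i j hij (by omega)
    have hshift := sweep_add_viewAngle (a := W (m + 1)) (b := W (m + 2)) (W := W) (m := m)
      fun j hj => (hdisj j (m + 1) (by omega) le_rfl).symm
    have hcorner := viewAngle_add_viewAngle_eq_turnAngle (hne m m.le_succ) (hne (m + 1) le_rfl)
      (hadj m m.lt_succ_self)
    rw [Finset.sum_range_succ, hprev, sweep_succ, sweep_succ]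
    linarith

end Sweep

section Crossings

/-- The signed crossing number of the directed segment from `a` to `b` with the horizontal line at
height `y`: `1` for an upward crossing and `-1` for a downward one. -/
noncomputable def crossingSign (a b : ℂ) (y : ℝ) : ℝ :=
  (if y ≤ b.im then 1 else 0) - (if y ≤ a.im then 1 else 0)

/-- The abscissa at which the line through `a` and `b` meets the horizontal line at height `y`
(with value `a.re` when `a.im = b.im`). -/
noncomputable def crossingAbscissa (a b : ℂ) (y : ℝ) : ℝ :=
  a.re + (y - a.im) * ((b.re - a.re) / (b.im - a.im))

theorem crossingSign_cases {a b : ℂ} {y : ℝ} (ha : a.im ≠ y) (hb : b.im ≠ y) :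
    (crossingSign a b y = 1 ∧ a.im < y ∧ y < b.im) ∨
      (crossingSign a b y = -1 ∧ b.im < y ∧ y < a.im) ∨
      (crossingSign a b y = 0 ∧ 0 < (a.im - y) * (b.im - y)) := by
  rcases ha.lt_or_gt with ha' | ha' <;> rcases hb.lt_or_gt with hb' | hb'
  · exact .inr (.inr ⟨by simp [crossingSign, ha'.not_ge, hb'.not_ge],
      mul_pos_of_neg_of_neg (sub_neg.2 ha') (sub_neg.2 hb')⟩)
  · exact .inl ⟨by simp [crossingSign, ha'.not_ge, hb'.le], ha', hb'⟩
  · exact .inr (.inl ⟨by simp [crossingSign, ha'.le, hb'.not_ge], hb', ha'⟩)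
  · exact .inr (.inr ⟨by simp [crossingSign, ha'.le, hb'.le],
      mul_pos (sub_pos.2 ha') (sub_pos.2 hb')⟩)

theorem sbtw_crossingAbscissa {a b : ℂ} {y : ℝ} (ha : a.im ≠ y) (hb : b.im ≠ y)
    (h : crossingSign a b y ≠ 0) : Sbtw ℝ a ⟨crossingAbscissa a b y, y⟩ b := by
  have hsep : a.im < y ∧ y < b.im ∨ b.im < y ∧ y < a.im := by
    rcases crossingSign_cases ha hb with h' | h' | h'
    exacts [.inl h'.2, .inr h'.2, absurd h'.1 h]
  have hne : b.im - a.im ≠ 0 := by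
    rcases hsep with h' | h'
    exacts [(sub_pos.2 (h'.1.trans h'.2)).ne', (sub_neg.2 (h'.1.trans h'.2)).ne]
  refine sbtw_iff_mem_image_Ioo_and_ne.2 ⟨⟨(y - a.im) / (b.im - a.im), ⟨?_, ?_⟩, ?_⟩, ?_⟩
  · rcases hsep with h' | h'
    exacts [div_pos (by linarith) (by linarith), div_pos_of_neg_of_neg (by linarith) (by linarith)]
  · rcases hsep with h' | h'
    exacts [(div_lt_one (by linarith)).2 (by linarith),
      (div_lt_one_of_neg (by linarith)).2 (by linarith)]
  · apply Complex.ext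
    · simp only [AffineMap.lineMap_apply, vsub_eq_sub, vadd_eq_add, Complex.add_re,
        Complex.smul_re, Complex.sub_re, smul_eq_mul, crossingAbscissa]
      ring
    · simp only [AffineMap.lineMap_apply, vsub_eq_sub, vadd_eq_add, Complex.add_im,
        Complex.smul_im, Complex.sub_im, smul_eq_mul, div_mul_cancel₀ _ hne, sub_add_cancel]
  · rintro rfl
    exact hne (sub_self _)

theorem viewAngle_eq_arg_sub_arg_sub {a b p : ℂ} (ha : a.im ≠ p.im) (hb : b.im ≠ p.im)
    (h : crossingSign a b p.im ≠ 0 → crossingAbscissa a b p.im ≠ p.re) :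
    viewAngle p a b = Complex.arg (b - p) - Complex.arg (a - p) -
      2 * π * (if crossingAbscissa a b p.im < p.re then crossingSign a b p.im else 0) := by
  have hai : (a - p).im ≠ 0 := by rwa [Complex.sub_im, sub_ne_zero]
  rcases eq_or_ne (crossingSign a b p.im) 0 with h0 | h0
  · have him : 0 < (a - p).im * (b - p).im := by
      rcases crossingSign_cases ha hb with h' | h' | h'
      · exact absurd (h0.symm.trans h'.1) (by norm_num)
      · exact absurd (h0.symm.trans h'.1) (by norm_num)
      · exact h'.2
    rw [viewAngle, arg_div_of_im_mul_im_pos him, h0, ite_self, mul_zero, sub_zero]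
  have hcross : Sbtw ℝ (a - p) ((crossingAbscissa a b p.im - p.re : ℝ) : ℂ) (b - p) := by
    have heq : ((crossingAbscissa a b p.im - p.re : ℝ) : ℂ) =
        ⟨crossingAbscissa a b p.im, p.im⟩ - p := by
      apply Complex.ext <;> simp
    rw [heq]
    exact (sbtw_sub_const_iff p).2 (sbtw_crossingAbscissa ha hb h0)
  rcases (h h0).lt_or_gt with hlt | hgt
  · rw [viewAngle, arg_div_of_sbtw_neg hai (sub_neg.2 hlt) hcross, if_pos hlt]
    rcases crossingSign_cases ha hb with ⟨hsign, hay, hby⟩ | ⟨hsign, hby, hay⟩ | ⟨hsign, -⟩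
    · rw [hsign, Complex.arg_neg_eq_arg_sub_pi_of_im_pos (sub_pos.2 hby),
        Complex.arg_neg_eq_arg_add_pi_of_im_neg (sub_neg.2 hay)]
      ring
    · rw [hsign, Complex.arg_neg_eq_arg_add_pi_of_im_neg (sub_neg.2 hby),
        Complex.arg_neg_eq_arg_sub_pi_of_im_pos (sub_pos.2 hay)]
      ring
    · exact absurd hsign h0
  · rw [viewAngle, arg_div_of_sbtw_pos hai (sub_pos.2 hgt) hcross, if_neg hgt.not_gt, mul_zero,
      sub_zero]

theorem arg_sub_sub_arg_sub_of_sbtw {a b p : ℂ} (h : Sbtw ℝ a p b) (ha : a.im ≠ p.im)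
    (hb : b.im ≠ p.im) :
    Complex.arg (a - p) - Complex.arg (b - p) = -π * crossingSign a b p.im := by
  have hray : Complex.arg (p - a) = Complex.arg (b - p) :=
    ((Complex.sameRay_iff.1 h.wbtw.sameRay_vsub).resolve_left
      (sub_ne_zero.2 h.ne_left)).resolve_left (sub_ne_zero.2 h.ne_right.symm)
  rw [← neg_sub p a, ← hray]
  rcases crossingSign_cases ha hb with ⟨hsign, hay, -⟩ | ⟨hsign, -, hay⟩ | ⟨-, hpos⟩
  · rw [hsign, Complex.arg_neg_eq_arg_sub_pi_of_im_pos (sub_pos.2 hay)]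
    ring
  · rw [hsign, Complex.arg_neg_eq_arg_add_pi_of_im_neg (sub_neg.2 hay)]
    ring
  · have him : (p - a).im < 0 ↔ (b - p).im < 0 := by
      rw [← Complex.arg_neg_iff, hray, Complex.arg_neg_iff]
    rw [Complex.sub_im, Complex.sub_im] at him
    rcases pos_and_pos_or_neg_and_neg_of_mul_pos hpos with ⟨hpa, hpb⟩ | ⟨hpa, hpb⟩
    · linarith [him.1 (by linarith)]
    · linarith [him.2 hpb]

end Crossings

section SignedArea

open MeasureTheory

theorem crossingSign_mul_eq_indicator_sub_indicator (a b : ℂ) (f : ℝ → ℝ) :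
    (fun y => crossingSign a b y * f y) =
      (Set.Ioc a.im b.im).indicator f - (Set.Ioc b.im a.im).indicator f := by
  funext y
  by_cases ha : y ≤ a.im <;> by_cases hb : y ≤ b.im <;>
    simp [crossingSign, ha, hb, not_lt.2, not_le.1]

theorem continuous_crossingAbscissa (a b : ℂ) : Continuous (crossingAbscissa a b) := by
  unfold crossingAbscissa
  fun_prop

theorem integrable_crossingSign_mul (a b : ℂ) {f : ℝ → ℝ} (hf : Continuous f) :
    Integrable fun y => crossingSign a b y * f y := by
  rw [crossingSign_mul_eq_indicator_sub_indicator]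
  exact (hf.integrableOn_Ioc.integrable_indicator measurableSet_Ioc).sub
    (hf.integrableOn_Ioc.integrable_indicator measurableSet_Ioc)

theorem integral_crossingSign_mul (a b : ℂ) {f : ℝ → ℝ} (hf : Continuous f) :
    ∫ y, crossingSign a b y * f y = ∫ y in a.im..b.im, f y := by
  rw [crossingSign_mul_eq_indicator_sub_indicator, integral_sub'
    (hf.integrableOn_Ioc.integrable_indicator measurableSet_Ioc)
    (hf.integrableOn_Ioc.integrable_indicator measurableSet_Ioc),
    integral_indicator measurableSet_Ioc, integral_indicator measurableSet_Ioc]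
  rfl

theorem integral_crossingAbscissa (a b : ℂ) :
    ∫ y in a.im..b.im, crossingAbscissa a b y = (b.im - a.im) * (a.re + b.re) / 2 := by
  unfold crossingAbscissa
  rw [intervalIntegral.integral_add (by simp) (Continuous.intervalIntegrable (by fun_prop) _ _),
    intervalIntegral.integral_mul_const, intervalIntegral.integral_sub (by simp) (by simp),
    integral_id, intervalIntegral.integral_const, intervalIntegral.integral_const, smul_eq_mul,
    smul_eq_mul]
  rcases eq_or_ne (b.im - a.im) 0 with h | h
  · simp [h]
  · field_simp
    ring

end SignedArea

section SignedSums

variable {ι : Type*} {s : Finset ι} {u X : ι → ℝ}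

theorem sum_mul_sub_nonneg_of_partial_sums_nonneg {M : ℝ}
    (h : ∀ e ∈ s, 0 ≤ ∑ i ∈ s with X i ≤ X e, u i) (hM : ∀ e ∈ s, X e ≤ M) :
    0 ≤ ∑ i ∈ s, u i * (M - X i) := by
  -- Abel summation, removing one level set of `X` at a time from the top.
  induction s using Finset.strongInduction generalizing M with
  | H s ih =>
    rcases s.eq_empty_or_nonempty with rfl | hs
    · exact Finset.sum_empty.ge
    obtain ⟨a, ha, hmax⟩ := s.exists_max_image X hs
    have hbelow : 0 ≤ ∑ i ∈ s with X i < X a, u i * (X a - X i) := by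
      refine ih (s.filter fun i => X i < X a) (Finset.filter_ssubset.2 ⟨a, ha, lt_irrefl _⟩)
        (fun e he => ?_) fun e he => (Finset.mem_filter.1 he).2.le
      obtain ⟨hes, hea⟩ := Finset.mem_filter.1 he
      rw [Finset.filter_filter, Finset.filter_congr fun i _ =>
        and_iff_right_of_imp fun hi : X i ≤ X e => hi.trans_lt hea]
      exact h e hes
    rw [Finset.sum_filter_of_ne fun i hi hne => (hmax i hi).lt_of_ne fun heq => by
      simp [heq] at hne] at hbelow
    have htotal : 0 ≤ ∑ i ∈ s, u i := by
      simpa only [Finset.filter_true_of_mem hmax] using h a ha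
    have hsplit : ∑ i ∈ s, u i * (M - X i) =
        ∑ i ∈ s, u i * (X a - X i) + (M - X a) * ∑ i ∈ s, u i := by
      rw [Finset.mul_sum, ← Finset.sum_add_distrib]
      exact Finset.sum_congr rfl fun i _ => by ring
    rw [hsplit]
    exact add_nonneg hbelow (mul_nonneg (sub_nonneg.2 (hM a ha)) htotal)

theorem sum_filter_le_eq_add_sum_filter_lt (hX : Set.InjOn X s) {e : ι} (he : e ∈ s) :
    ∑ i ∈ s with X i ≤ X e, u i = u e + ∑ i ∈ s with X i < X e, u i := by
  classical
  have hinsert : s.filter (fun i => X i ≤ X e) = insert e (s.filter fun i => X i < X e) := by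
    ext i
    simp only [Finset.mem_filter, Finset.mem_insert, le_iff_lt_or_eq]
    constructor
    · rintro ⟨hi, hlt | heq⟩
      exacts [.inr ⟨hi, hlt⟩, .inl (hX hi he heq)]
    · rintro (rfl | ⟨hi, hlt⟩)
      exacts [⟨he, .inr rfl⟩, ⟨hi, .inl hlt⟩]
  rw [hinsert, Finset.sum_insert (by simp)]

theorem eq_neg_one_of_forall_add_two_mul_sum_lt_eq {c : ℝ} (hX : Set.InjOn X s)
    (hu : ∀ i ∈ s, u i = 1 ∨ u i = -1)
    (hc : ∀ e ∈ s, u e + 2 * ∑ i ∈ s with X i < X e, u i = c)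
    (hsum : ∑ i ∈ s, u i = 0) (hpos : 0 < ∑ i ∈ s, u i * X i) : c = -1 := by
  have hs : s.Nonempty := Finset.nonempty_of_sum_ne_zero hpos.ne'
  obtain ⟨e₀, he₀, hmin⟩ := s.exists_min_image X hs
  have hc₀ : u e₀ = c := by
    simpa [Finset.filter_false_of_mem fun i hi => (hmin i hi).not_gt] using hc e₀ he₀
  refine hc₀ ▸ (hu e₀ he₀).resolve_left fun hone => hpos.not_ge ?_
  have hpartial : ∀ e ∈ s, 0 ≤ ∑ i ∈ s with X i ≤ X e, u i := fun e he => by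
    rw [sum_filter_le_eq_add_sum_filter_lt hX he]
    rcases hu e he with h | h <;> linarith [hc e he]
  obtain ⟨b, -, hmax⟩ := s.exists_max_image X hs
  have habel := sum_mul_sub_nonneg_of_partial_sums_nonneg hpartial hmax
  simpa only [mul_sub, Finset.sum_sub_distrib, ← Finset.sum_mul, hsum, zero_mul, zero_sub,
    Left.nonneg_neg_iff] using habel

end SignedSums

section Polygons

/-- The closed polygon with cyclically indexed vertices `V` is simple: its edges are nondegenerate,
consecutive edges meet only in their common vertex, and all other pairs of edges are disjoint. -/
structure IsSimplePolygon {n : ℕ} (V : ZMod n → ℂ) : Prop where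
  ne_succ : ∀ i, V i ≠ V (i + 1)
  inter_subset : ∀ i,
    segment ℝ (V i) (V (i + 1)) ∩ segment ℝ (V (i + 1)) (V (i + 1 + 1)) ⊆ {V (i + 1)}
  disjoint : ∀ i j, j ≠ i → j ≠ i + 1 → j + 1 ≠ i →
    Disjoint (segment ℝ (V i) (V (i + 1))) (segment ℝ (V j) (V (j + 1)))

theorem natCast_ne_natCast_of_lt_of_lt_add {n a b : ℕ} (hab : a < b) (hba : b < a + n) :
    (b : ZMod n) ≠ a := fun h => by
  have hdvd := (Nat.modEq_iff_dvd' hab.le).1 ((ZMod.natCast_eq_natCast_iff _ _ _).1 h.symm)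
  exact absurd (Nat.le_of_dvd (by omega) hdvd) (by omega)

theorem sum_range_natCast {m : ℕ} (f : ZMod (m + 1) → ℝ) :
    ∑ k ∈ Finset.range (m + 1), f (k : ZMod (m + 1)) = ∑ i, f i := by
  rw [Finset.sum_range]
  exact Finset.sum_congr rfl fun i _ => congrArg f (Fin.cast_val_eq_self i)

namespace IsSimplePolygon

variable {n : ℕ} {V : ZMod n → ℂ}

theorem shift (hV : IsSimplePolygon V) (e : ZMod n) : IsSimplePolygon fun i => V (e + i) where
  ne_succ i := by simpa only [add_assoc] using hV.ne_succ (e + i)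
  inter_subset i := by simpa only [add_assoc] using hV.inter_subset (e + i)
  disjoint i j hij hij' hji := by
    simpa only [add_assoc] using hV.disjoint (e + i) (e + j) (by simpa using hij)
      (by simpa [add_assoc] using hij') (by simpa [add_assoc] using hji)

theorem inter_subset_left (hV : IsSimplePolygon V) {e k : ZMod n} (hk : k ≠ e) (hk' : k ≠ e + 1) :
    segment ℝ (V e) (V (e + 1)) ∩ segment ℝ (V k) (V (k + 1)) ⊆ {V e} := by
  by_cases h : k + 1 = e
  · subst h
    rw [Set.inter_comm]
    exact hV.inter_subset k
  · rw [(hV.disjoint e k hk hk' h).inter_eq]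
    exact Set.empty_subset _

theorem inter_subset_right (hV : IsSimplePolygon V) {e k : ZMod n} (hk : k ≠ e) (hk' : k + 1 ≠ e) :
    segment ℝ (V e) (V (e + 1)) ∩ segment ℝ (V k) (V (k + 1)) ⊆ {V (e + 1)} := by
  by_cases h : k = e + 1
  · subst h
    exact hV.inter_subset e
  · rw [(hV.disjoint e k hk h hk').inter_eq]
    exact Set.empty_subset _

end IsSimplePolygon

theorem segment_subset_segment_of_wbtw {a p b : ℂ} (h : Wbtw ℝ a p b) :
    segment ℝ p b ⊆ segment ℝ a b :=
  (convex_segment a b).segment_subset (mem_segment_iff_wbtw.2 h) (right_mem_segment ℝ a b)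

theorem left_notMem_segment_of_sbtw {a p b : ℂ} (h : Sbtw ℝ a p b) : a ∉ segment ℝ p b :=
  fun ha => h.ne_left (wbtw_swap_left_iff ℝ b |>.1 ⟨h.wbtw, mem_segment_iff_wbtw.1 ha⟩).symm

theorem right_notMem_segment_of_sbtw {a p b : ℂ} (h : Sbtw ℝ a p b) : b ∉ segment ℝ a p := by
  rw [segment_symm]
  exact left_notMem_segment_of_sbtw h.symm

/-- The path that leaves `p` and then follows the vertices `V 1, V 2, …`; for `p` on the edge from
`V 0` to `V 1` this is the polygon cut open at `p`. -/
def cutPath {n : ℕ} (p : ℂ) (V : ZMod n → ℂ) : ℕ → ℂ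
  | 0 => p
  | k + 1 => V (k + 1 : ℕ)

theorem turnAngle_cutPath {n : ℕ} {V : ZMod n → ℂ} {p : ℂ} (hp : Sbtw ℝ (V 0) p (V 1)) :
    ∀ i : ℕ, turnAngle (cutPath p V i) (cutPath p V (i + 1)) (cutPath p V (i + 2)) =
      turnAngle (V i) (V (i + 1)) (V (i + 1 + 1))
  | 0 => by
    simpa only [cutPath, Nat.cast_succ, Nat.cast_zero, zero_add] using turnAngle_of_sbtw_left hp _
  | i + 1 => by simp only [cutPath, Nat.cast_succ]

/-- The sum of the exterior angles of the polygon `V`. -/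
noncomputable def totalTurning {n : ℕ} [NeZero n] (V : ZMod n → ℂ) : ℝ :=
  ∑ i, turnAngle (V i) (V (i + 1)) (V (i + 1 + 1))

theorem totalTurning_shift {n : ℕ} [NeZero n] (V : ZMod n → ℂ) (e : ZMod n) :
    totalTurning (fun i => V (e + i)) = totalTurning V := by
  simpa only [totalTurning, add_assoc, Equiv.coe_addLeft] using
    Equiv.sum_comp (Equiv.addLeft e) fun i => turnAngle (V i) (V (i + 1)) (V (i + 1 + 1))

namespace IsSimplePolygon

variable {n m : ℕ} {p : ℂ}

theorem cutPath_ne_succ {V : ZMod n → ℂ} (hV : IsSimplePolygon V)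
    (hp : Sbtw ℝ (V 0) p (V 1)) :
    ∀ i, cutPath p V i ≠ cutPath p V (i + 1)
  | 0 => by simpa [cutPath] using hp.ne_right
  | i + 1 => by simpa only [cutPath, Nat.cast_succ] using hV.ne_succ (i + 1 : ℕ)

theorem cutPath_inter_subset {V : ZMod n → ℂ} (hV : IsSimplePolygon V)
    (hp : Sbtw ℝ (V 0) p (V 1)) :
    ∀ i, segment ℝ (cutPath p V i) (cutPath p V (i + 1)) ∩
      segment ℝ (cutPath p V (i + 1)) (cutPath p V (i + 2)) ⊆ {cutPath p V (i + 1)}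
  | 0 => by
    have hV₀ := hV.inter_subset 0
    rw [zero_add] at hV₀
    simpa only [cutPath, Nat.cast_succ, Nat.cast_zero, zero_add] using
      (Set.inter_subset_inter_left _ (segment_subset_segment_of_wbtw hp.wbtw)).trans hV₀
  | i + 1 => by simpa only [cutPath, Nat.cast_succ] using hV.inter_subset (i + 1 : ℕ)

theorem cutPath_disjoint {V : ZMod (m + 1) → ℂ} (hV : IsSimplePolygon V)
    (hp : Sbtw ℝ (V 0) p (V 1)) :
    ∀ i j, i + 1 < j → j ≤ m → Disjoint (segment ℝ (cutPath p V i) (cutPath p V (i + 1)))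
      (segment ℝ (cutPath p V j) (cutPath p V (j + 1)))
  | 0, j + 1, hij, hj => by
    have h₀ := natCast_ne_natCast_of_lt_of_lt_add (n := m + 1) (a := 0) (b := j + 1) (by omega)
      (by omega)
    have h₁ := natCast_ne_natCast_of_lt_of_lt_add (n := m + 1) (a := 1) (b := j + 1) (by omega)
      (by omega)
    have hV₀ := hV.inter_subset_left (e := 0) (k := (j + 1 : ℕ)) (by simpa using h₀)
      (by simpa using h₁)
    simp only [cutPath, Nat.cast_succ, Nat.cast_zero, zero_add] at hV₀ ⊢
    refine Set.disjoint_left.2 fun z hz hz' => ?_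
    obtain rfl : z = V 0 := hV₀ ⟨segment_subset_segment_of_wbtw hp.wbtw hz, hz'⟩
    exact left_notMem_segment_of_sbtw hp hz
  | i + 1, j + 1, hij, hj => by
    have h₁ := natCast_ne_natCast_of_lt_of_lt_add (n := m + 1) (a := i + 1) (b := j + 1)
      (by omega) (by omega)
    have h₂ := natCast_ne_natCast_of_lt_of_lt_add (n := m + 1) (a := i + 1 + 1) (b := j + 1)
      (by omega) (by omega)
    have h₃ := natCast_ne_natCast_of_lt_of_lt_add (n := m + 1) (a := i + 1) (b := j + 1 + 1)
      (by omega) (by omega)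
    simpa only [cutPath, Nat.cast_succ] using hV.disjoint (i + 1 : ℕ) (j + 1 : ℕ) h₁
      (by rwa [← Nat.cast_succ]) (by rwa [← Nat.cast_succ])

theorem disjoint_segment_left_of_sbtw {l : ℕ} {V : ZMod (l + 2) → ℂ} (hV : IsSimplePolygon V)
    (hp : Sbtw ℝ (V 0) p (V 1)) {j : ℕ} (hj : j < l) :
    Disjoint (segment ℝ (V 0) p) (segment ℝ (V (j + 1 : ℕ)) (V (j + 1 + 1 : ℕ))) := by
  have h₀ := natCast_ne_natCast_of_lt_of_lt_add (n := l + 2) (a := 0) (b := j + 1) (by omega)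
    (by omega)
  have h₁ := natCast_ne_natCast_of_lt_of_lt_add (n := l + 2) (a := 0) (b := j + 1 + 1) (by omega)
    (by omega)
  have hV₀ := hV.inter_subset_right (e := 0) (k := (j + 1 : ℕ)) (by simpa using h₀)
    (by simpa using h₁)
  rw [zero_add, ← Nat.cast_succ] at hV₀
  refine Set.disjoint_left.2 fun z hz hz' => ?_
  have hz₀ : z ∈ segment ℝ (V 0) (V 1) := (convex_segment _ _).segment_subset
    (left_mem_segment _ _ _) (mem_segment_iff_wbtw.2 hp.wbtw) hz
  obtain rfl : z = V 1 := hV₀ ⟨hz₀, hz'⟩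
  exact right_notMem_segment_of_sbtw hp hz

theorem turnAngle_last_eq {l : ℕ} {V : ZMod (l + 2) → ℂ} (hV : IsSimplePolygon V)
    (hp : Sbtw ℝ (V 0) p (V 1)) :
    turnAngle (V (l + 1 : ℕ)) (V 0) (V 1) =
      viewAngle (V (l + 1 : ℕ)) (V 0) p + viewAngle p (V (l + 1 : ℕ)) (V 0) := by
  have hlast : ((l + 1 : ℕ) : ZMod (l + 2)) + 1 = 0 := by
    rw [← Nat.cast_succ]; exact ZMod.natCast_self _
  have hinter := hV.inter_subset (l + 1 : ℕ)
  have hne := hV.ne_succ (l + 1 : ℕ)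
  rw [hlast, zero_add] at hinter
  rw [hlast] at hne
  rw [← turnAngle_of_sbtw_right hp, viewAngle_add_viewAngle_eq_turnAngle hne hp.ne_left.symm]
  exact (Set.inter_subset_inter_right _ <| (convex_segment _ _).segment_subset
    (left_mem_segment _ _ _) (mem_segment_iff_wbtw.2 hp.wbtw)).trans hinter

theorem totalTurning_eq_two_mul_sweep {V : ZMod (m + 1) → ℂ} (hV : IsSimplePolygon V)
    (hp : Sbtw ℝ (V 0) p (V 1)) :
    totalTurning V = 2 * sweep p (fun k => V (k + 1 : ℕ)) m := by
  obtain _ | l := m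
  · exact absurd (congrArg V (Subsingleton.elim (α := Fin 1) _ _)) (hV.ne_succ 0)
  have hlast : ((l + 1 + 1 : ℕ) : ZMod (l + 2)) = 0 := ZMod.natCast_self _
  have hturn : totalTurning V = ∑ i ∈ Finset.range (l + 1),
      turnAngle (cutPath p V i) (cutPath p V (i + 1)) (cutPath p V (i + 2)) +
        turnAngle (V (l + 1 : ℕ)) (V 0) (V 1) := by
    rw [totalTurning, ← sum_range_natCast, Finset.sum_range_succ, ← Nat.cast_succ (l + 1), hlast,
      zero_add, Finset.sum_congr rfl fun i _ => turnAngle_cutPath hp i]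
  rw [sum_turnAngle_eq_sweep_add_sweep (fun i _ => hV.cutPath_ne_succ hp i)
    (fun i _ => hV.cutPath_inter_subset hp i) (hV.cutPath_disjoint hp),
    sweep_succ' _ (cutPath p V), hV.turnAngle_last_eq hp] at hturn
  have hmove := sweep_add_viewAngle (W := fun k => V (k + 1 : ℕ)) fun j hj =>
    hV.disjoint_segment_left_of_sbtw hp hj
  simp only [cutPath, hlast, zero_add, Nat.cast_one, viewAngle_eq_zero_of_wbtw_left hp.wbtw,
    viewAngle_eq_zero_of_wbtw_right hp.wbtw, add_zero] at hturn hmove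
  have hsweep : sweep p (fun k => V (k + 1 : ℕ)) (l + 1) =
      sweep p (fun k => V (k + 1 : ℕ)) l + viewAngle p (V (l + 1 : ℕ)) (V 0) := by
    rw [sweep_succ, hlast]
  linarith

end IsSimplePolygon

end Polygons

section PolygonCrossings

variable {n : ℕ} {V : ZMod n → ℂ} {y : ℝ}

/-- The signed crossing number of the `i`-th edge of `V` with the horizontal line at height `y`. -/
noncomputable def edgeSign (V : ZMod n → ℂ) (y : ℝ) (i : ZMod n) : ℝ :=
  crossingSign (V i) (V (i + 1)) y

/-- The abscissa at which the `i`-th edge of `V` meets the horizontal line at height `y`. -/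
noncomputable def edgeAbscissa (V : ZMod n → ℂ) (y : ℝ) (i : ZMod n) : ℝ :=
  crossingAbscissa (V i) (V (i + 1)) y

theorem edgeSign_shift (V : ZMod n → ℂ) (y : ℝ) (e i : ZMod n) :
    edgeSign (fun i => V (e + i)) y i = edgeSign V y (e + i) := by
  simp only [edgeSign, add_assoc]

theorem edgeAbscissa_shift (V : ZMod n → ℂ) (y : ℝ) (e i : ZMod n) :
    edgeAbscissa (fun i => V (e + i)) y i = edgeAbscissa V y (e + i) := by
  simp only [edgeAbscissa, add_assoc]

theorem sum_edgeSign_eq_zero [NeZero n] (V : ZMod n → ℂ) (y : ℝ) : ∑ i, edgeSign V y i = 0 := by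
  have hshift : ∑ i, (if y ≤ (V (i + 1)).im then (1 : ℝ) else 0) =
      ∑ i, if y ≤ (V i).im then 1 else 0 :=
    Equiv.sum_comp (Equiv.addRight (1 : ZMod n)) fun i => if y ≤ (V i).im then (1 : ℝ) else 0
  simp only [edgeSign, crossingSign, Finset.sum_sub_distrib, hshift, sub_self]

namespace IsSimplePolygon

theorem edgeAbscissa_injOn (hV : IsSimplePolygon V) (hy : ∀ i, (V i).im ≠ y) :
    Set.InjOn (edgeAbscissa V y) {i | edgeSign V y i ≠ 0} := by
  intro i hi e he hie
  have hmem (k : ZMod n) (hk : edgeSign V y k ≠ 0) :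
      (⟨edgeAbscissa V y k, y⟩ : ℂ) ∈ segment ℝ (V k) (V (k + 1)) :=
    mem_segment_iff_wbtw.2 (sbtw_crossingAbscissa (hy k) (hy (k + 1)) hk).wbtw
  have hmem_i := hmem i hi
  have hmem_e := hmem e he
  rw [hie] at hmem_i
  by_contra hne
  have hnot_vertex (k : ZMod n) : (⟨edgeAbscissa V y e, y⟩ : ℂ) ≠ V k := fun h =>
    hy k (congrArg Complex.im h).symm
  rcases eq_or_ne e (i + 1) with rfl | hei
  · exact hnot_vertex _ (hV.inter_subset i ⟨hmem_i, hmem_e⟩)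
  · exact hnot_vertex _ (hV.inter_subset_left (Ne.symm hne) hei ⟨hmem_i, hmem_e⟩)

theorem sweep_eq_of_edgeSign_ne_zero {m : ℕ} {V : ZMod (m + 1) → ℂ} (hV : IsSimplePolygon V)
    (hy : ∀ i, (V i).im ≠ y) (h₀ : edgeSign V y 0 ≠ 0) :
    sweep ⟨edgeAbscissa V y 0, y⟩ (fun k => V (k + 1 : ℕ)) m = -π * (edgeSign V y 0 +
      2 * ∑ i with edgeAbscissa V y i < edgeAbscissa V y 0, edgeSign V y i) := by
  set p : ℂ := ⟨edgeAbscissa V y 0, y⟩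
  set g : ZMod (m + 1) → ℝ := fun i =>
    if edgeAbscissa V y i < edgeAbscissa V y 0 then edgeSign V y i else 0 with hg
  have hview : ∀ k ∈ Finset.range m, viewAngle p (V (k + 1 : ℕ)) (V (k + 1 + 1 : ℕ)) =
      (Complex.arg (V (k + 1 + 1 : ℕ) - p) - Complex.arg (V (k + 1 : ℕ) - p)) -
        2 * π * g (k + 1 : ℕ) := by
    intro k hk
    have hk₀ := natCast_ne_natCast_of_lt_of_lt_add (n := m + 1) (a := 0) (b := k + 1) (by omega)
      (by have := Finset.mem_range.1 hk; omega)
    have hne (hk' : edgeSign V y (k + 1 : ℕ) ≠ 0) :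
        edgeAbscissa V y (k + 1 : ℕ) ≠ edgeAbscissa V y 0 := fun h =>
      hk₀ ((hV.edgeAbscissa_injOn hy hk' h₀ h).trans Nat.cast_zero.symm)
    rw [Nat.cast_succ (k + 1)]
    exact viewAngle_eq_arg_sub_arg_sub (hy _) (hy _) hne
  have hsum_g : ∑ k ∈ Finset.range m, g (k + 1 : ℕ) = ∑ i, g i := by
    rw [← sum_range_natCast g, Finset.sum_range_succ' _ m]
    simp [hg]
  have htelescope := Finset.sum_range_sub (fun k => Complex.arg (V (k + 1 : ℕ) - p)) m
  have hopp : Complex.arg (V 0 - p) - Complex.arg (V (0 + 1) - p) = -π * edgeSign V y 0 :=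
    arg_sub_sub_arg_sub_of_sbtw (sbtw_crossingAbscissa (hy 0) (hy _) h₀) (hy 0) (hy _)
  rw [sweep, Finset.sum_congr rfl hview, Finset.sum_sub_distrib, htelescope, ← Finset.mul_sum,
    hsum_g, ZMod.natCast_self, Nat.cast_succ, Nat.cast_zero, hopp, Finset.sum_filter]
  ring

theorem totalTurning_eq_of_edgeSign_ne_zero [NeZero n] (hV : IsSimplePolygon V)
    (hy : ∀ i, (V i).im ≠ y) {e : ZMod n} (he : edgeSign V y e ≠ 0) :
    totalTurning V = -(2 * π) * (edgeSign V y e +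
      2 * ∑ i with edgeAbscissa V y i < edgeAbscissa V y e, edgeSign V y i) := by
  obtain ⟨m, rfl⟩ := Nat.exists_eq_succ_of_ne_zero (NeZero.ne n)
  have he₀ : edgeSign (fun i => V (e + i)) y 0 ≠ 0 := by rwa [edgeSign_shift, add_zero]
  have hcross := sbtw_crossingAbscissa (hy (e + 0)) (hy (e + (0 + 1))) he₀
  have hsum : ∑ i, (if edgeAbscissa V y (e + i) < edgeAbscissa V y e then edgeSign V y (e + i)
      else 0) = ∑ i, if edgeAbscissa V y i < edgeAbscissa V y e then edgeSign V y i else 0 :=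
    Equiv.sum_comp (Equiv.addLeft e) fun i =>
      if edgeAbscissa V y i < edgeAbscissa V y e then edgeSign V y i else 0
  rw [← totalTurning_shift V e, (hV.shift e).totalTurning_eq_two_mul_sweep
    (p := ⟨edgeAbscissa (fun i => V (e + i)) y 0, y⟩) (by simpa [edgeAbscissa] using hcross),
    (hV.shift e).sweep_eq_of_edgeSign_ne_zero (fun i => hy (e + i)) he₀, Finset.sum_filter,
    Finset.sum_filter]
  simp only [edgeSign_shift, edgeAbscissa_shift, add_zero, hsum]
  ring

end IsSimplePolygon

end PolygonCrossings

section TotalTurning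

open MeasureTheory

variable {n : ℕ} [NeZero n] {V : ZMod n → ℂ}

/-- The signed area enclosed by the polygon `V`, by the shoelace formula; it is positive for a
simple polygon traversed counterclockwise. -/
noncomputable def signedArea (V : ZMod n → ℂ) : ℝ :=
  (∑ i, (starRingEnd ℂ (V i) * V (i + 1)).im) / 2

theorem integral_sum_edgeSign_mul_edgeAbscissa (V : ZMod n → ℂ) :
    ∫ y, ∑ i, edgeSign V y i * edgeAbscissa V y i = signedArea V := by
  have hshift : ∑ i, (V (i + 1)).re * (V (i + 1)).im = ∑ i, (V i).re * (V i).im :=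
    Equiv.sum_comp (Equiv.addRight (1 : ZMod n)) fun i => (V i).re * (V i).im
  have hterm (i : ZMod n) : ∫ y, edgeSign V y i * edgeAbscissa V y i =
      (starRingEnd ℂ (V i) * V (i + 1)).im / 2 +
        ((V (i + 1)).re * (V (i + 1)).im - (V i).re * (V i).im) / 2 := by
    refine ((integral_crossingSign_mul _ _ (continuous_crossingAbscissa _ _)).trans
      (integral_crossingAbscissa _ _)).trans ?_
    simp only [Complex.mul_im, Complex.conj_re, Complex.conj_im]
    ring
  have hint (i : ZMod n) : Integrable fun y => edgeSign V y i * edgeAbscissa V y i :=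
    integrable_crossingSign_mul _ _ (continuous_crossingAbscissa _ _)
  rw [integral_finsetSum _ fun i _ => hint i,
    Finset.sum_congr rfl fun i _ => hterm i, Finset.sum_add_distrib, ← Finset.sum_div,
    ← Finset.sum_div, Finset.sum_sub_distrib, hshift, sub_self, zero_div, add_zero, signedArea]

theorem exists_sum_edgeSign_mul_edgeAbscissa_pos (harea : 0 < signedArea V) :
    ∃ y, (∀ i, (V i).im ≠ y) ∧ 0 < ∑ i, edgeSign V y i * edgeAbscissa V y i := by
  by_contra! hnonpos
  refine harea.not_ge ((integral_sum_edgeSign_mul_edgeAbscissa V).symm.trans_le ?_)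
  have hgeneric : ∀ᵐ y : ℝ, y ∉ Set.range fun i => (V i).im :=
    compl_mem_ae_iff.2 ((Set.finite_range _).measure_zero _)
  refine integral_nonpos_of_ae ?_
  filter_upwards [hgeneric] with y hy
  exact hnonpos y fun i hi => hy ⟨i, hi⟩

theorem IsSimplePolygon.totalTurning_eq_two_pi (hV : IsSimplePolygon V)
    (harea : 0 < signedArea V) : totalTurning V = 2 * π := by
  obtain ⟨y, hy, hpos⟩ := exists_sum_edgeSign_mul_edgeAbscissa_pos harea
  have hmem {i : ZMod n} (hi : i ∈ Finset.univ.filter (edgeSign V y · ≠ 0)) :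
      edgeSign V y i ≠ 0 := (Finset.mem_filter.1 hi).2
  have hc : -totalTurning V / (2 * π) = -1 := by
    refine eq_neg_one_of_forall_add_two_mul_sum_lt_eq (u := edgeSign V y)
      (s := Finset.univ.filter (edgeSign V y · ≠ 0))
      ((hV.edgeAbscissa_injOn hy).mono fun i hi => hmem hi) (fun i hi => ?_) (fun e he => ?_) ?_ ?_
    · rcases crossingSign_cases (hy i) (hy (i + 1)) with h | h | h
      exacts [.inl h.1, .inr h.1, absurd h.1 (hmem hi)]
    · rw [Finset.filter_comm, Finset.sum_filter_ne_zero,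
        hV.totalTurning_eq_of_edgeSign_ne_zero hy (hmem he)]
      field_simp
    · rw [Finset.sum_filter_ne_zero, sum_edgeSign_eq_zero]
    · rwa [Finset.sum_filter_of_ne fun i _ => left_ne_zero_of_mul]
  field_simp at hc
  linarith

end TotalTurning

/-- For a simple closed polygon in the plane (vertices in `ℂ`), traversed counterclockwise,
the density `(1/2π)·Σ (π − ∠Vᵢ)` equals `1`.  The interior angle `∠Vᵢ` is encoded by the
condition that the exterior (turn) angle `π − ∠Vᵢ` is the argument of the quotient of
consecutive edge vectors. -/
theorem stmt5 {n : ℕ} [NeZero n] (hn : 3 ≤ n) (V : ZMod n → ℂ) (angle : ZMod n → ℝ)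
    (hinj : Function.Injective V)
    (hsimple : ∀ i j : ZMod n, j ≠ i → j ≠ i + 1 → j + 1 ≠ i →
      Disjoint (segment ℝ (V i) (V (i + 1))) (segment ℝ (V j) (V (j + 1))))
    (hadj : ∀ i : ZMod n,
      segment ℝ (V i) (V (i + 1)) ∩ segment ℝ (V (i + 1)) (V (i + 2)) = {V (i + 1)})
    (hccw : 0 < ∑ i : ZMod n, ((starRingEnd ℂ) (V i) * V (i + 1)).im)
    (hang : ∀ i : ZMod n, 0 < angle i ∧ angle i < 2 * π ∧
      π - angle i = Complex.arg ((V (i + 2) - V (i + 1)) / (V (i + 1) - V i))) :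
    (1 / (2 * π)) * ∑ i : ZMod n, (π - angle i) = 1 := by
  have hsucc (i : ZMod n) : i + 1 + 1 = i + 2 := by rw [add_assoc, one_add_one_eq_two]
  have : Fact (1 < n) := ⟨by omega⟩
  have hV : IsSimplePolygon V :=
    { ne_succ := fun i => hinj.ne (by simp)
      inter_subset := fun i => by rw [hsucc, hadj]
      disjoint := hsimple }
  have hturning : ∑ i, (π - angle i) = totalTurning V :=
    Finset.sum_congr rfl fun i _ => by rw [(hang i).2.2, turnAngle, hsucc]
  rw [hturning, hV.totalTurning_eq_two_pi (half_pos hccw), one_div_mul_cancel two_pi_pos.ne']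
end

section
/- Every convex generic coherent hyperbolic polygon with at least four vertices has at least four locally extremal vertices; equivalently, the cyclic sequence of circumradii R₁,…,Rₙ (Rᵢ the circumradius of triangle Vᵢ₋₁VᵢVᵢ₊₁) has at least two local maxima and at least two local minima. -/
/-- Geodesic segment in the hyperbolic plane (upper half-plane model), described
metrically via betweenness. -/
def GSeg (A B : UpperHalfPlane) : Set UpperHalfPlane :=
  {z | dist A z + dist z B = dist A B}

/-- Three points lie on a common geodesic iff one of them is between the other two. -/
def HCollinear (A B C : UpperHalfPlane) : Prop :=
  A ∈ GSeg B C ∨ B ∈ GSeg A C ∨ C ∈ GSeg A B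

/-- A hyperbolically convex subset of the hyperbolic plane. -/
def HConvexSet (S : Set UpperHalfPlane) : Prop :=
  ∀ a ∈ S, ∀ b ∈ S, GSeg a b ⊆ S

/-- Hyperbolic convex hull. -/
def HConvexHull (S : Set UpperHalfPlane) : Set UpperHalfPlane :=
  ⋂₀ {T | HConvexSet T ∧ S ⊆ T}

/-- The infinite cone with apex `V` spanned by the rays from `V` through `A` and `B`:
points lying on a geodesic ray from `V` through some point of the segment `AB`. -/
def HCone (V A B : UpperHalfPlane) : Set UpperHalfPlane :=
  {z | ∃ w ∈ GSeg A B, w ∈ GSeg V z ∨ z ∈ GSeg V w}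

/-- The unsigned hyperbolic angle at `B` in the triangle `A B C`, via the hyperbolic
law of cosines. -/
noncomputable def hAngle (A B C : UpperHalfPlane) : ℝ :=
  Real.arccos ((Real.cosh (dist B A) * Real.cosh (dist B C) - Real.cosh (dist A C)) /
    (Real.sinh (dist B A) * Real.sinh (dist B C)))

/-- The mediatrix (perpendicular bisector) of the segment `AB`: the set of points
equidistant from `A` and `B`. -/
def Mediatrix (A B : UpperHalfPlane) : Set UpperHalfPlane :=
  {z | dist z A = dist z B}

open Real

/-!
Lift the polygon to the hyperboloid `lorentz u u = 1` in `ℝ³`, so that its sides span planes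
through the origin with normals `Nᵢ = wᵢ × wᵢ₊₁`. The vector `Pᵢ = Oᵢ / cosh Rᵢ` has Lorentz
product `1` with the three vertices on the `i`-th circumcircle, and its Lorentz square decreases
in `Rᵢ`. Both `Pᵢ` and `Pᵢ₊₁` have product `1` with `wᵢ` and `wᵢ₊₁`, so `Pᵢ₊₁ - Pᵢ` is dual to
`lᵢ Nᵢ` for some `lᵢ`, and coherence makes `lᵢ` positive or negative according to whether the
radius decreases or increases from `i` to `i + 1`. Summing around the polygon gives
`∑ lᵢ Nᵢ = 0`. The normals `Nᵢ` of a strictly convex cone again form one, and a linear relation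
between the generators of such a cone cannot have only two cyclic blocks of constant sign: the
plane through the generators where the blocks start would separate them.
-/

namespace DiscreteFourVertex

open scoped Matrix

/-! ### Lorentz geometry of `ℝ³` -/

/-- The Lorentz form `u₀v₀ - u₁v₁ - u₂v₂`, for which points of the hyperbolic plane are unit
vectors. -/
noncomputable def lorentz : LinearMap.BilinForm ℝ (Fin 3 → ℝ) :=
  Matrix.toBilin' (Matrix.diagonal ![1, -1, -1])

/-- The identification of `ℝ³` with its dual given by the Lorentz form, where linear forms are
written as Euclidean dot products. -/
noncomputable def lorentzDual : (Fin 3 → ℝ) →ₗ[ℝ] (Fin 3 → ℝ) :=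
  Matrix.toLin' (Matrix.diagonal ![1, -1, -1])

theorem lorentz_apply (u v : Fin 3 → ℝ) :
    lorentz u v = u 0 * v 0 - u 1 * v 1 - u 2 * v 2 := by
  simp only [lorentz, Matrix.toBilin'_apply', dotProduct, Matrix.mulVec_diagonal,
    Fin.sum_univ_three, Matrix.cons_val]
  ring

theorem lorentz_comm (u v : Fin 3 → ℝ) : lorentz u v = lorentz v u := by
  simp only [lorentz_apply]; ring

theorem dotProduct_lorentzDual (u v : Fin 3 → ℝ) : u ⬝ᵥ lorentzDual v = lorentz u v := by
  simp [lorentz, lorentzDual, Matrix.toBilin'_apply']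

theorem lorentz_self_neg_of_orthogonal {x v : Fin 3 → ℝ} (hv : 0 < lorentz v v)
    (hxv : lorentz x v = 0) (hx : x ≠ 0) : lorentz x x < 0 := by
  rw [lorentz_apply] at hv hxv ⊢
  have hv₀ : 0 < v 0 ^ 2 := by nlinarith
  have hv₀' : v 0 ≠ 0 := by rintro h; simp [h] at hv₀
  have cauchy : (x 0 * v 0) ^ 2 ≤ (x 1 ^ 2 + x 2 ^ 2) * (v 1 ^ 2 + v 2 ^ 2) := by
    rw [show x 0 * v 0 = x 1 * v 1 + x 2 * v 2 by linarith]
    nlinarith [sq_nonneg (x 1 * v 2 - x 2 * v 1)]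
  have hspace : 0 < x 1 ^ 2 + x 2 ^ 2 := by
    by_contra! h
    have h₁ : x 1 = 0 := by nlinarith
    have h₂ : x 2 = 0 := by nlinarith
    have h₀ : x 0 = 0 := by simpa [h₁, h₂, hv₀'] using hxv
    exact hx (by ext i; fin_cases i <;> assumption)
  have hlt : x 0 ^ 2 * v 0 ^ 2 < (x 1 ^ 2 + x 2 ^ 2) * v 0 ^ 2 :=
    calc x 0 ^ 2 * v 0 ^ 2 = (x 0 * v 0) ^ 2 := by ring
      _ ≤ _ := cauchy
      _ < _ := mul_lt_mul_of_pos_left (by linarith) hspace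
  linarith [lt_of_mul_lt_mul_right hlt hv₀.le]

theorem eq_of_lorentz_eq_one {u v : Fin 3 → ℝ} (hu : lorentz u u = 1) (hv : lorentz v v = 1)
    (huv : lorentz u v = 1) : u = v := by
  by_contra h
  refine (lorentz_self_neg_of_orthogonal (x := u - v) (v := v) (by simp [hv]) ?_
    (sub_ne_zero.2 h)).ne ?_
  · rw [map_sub, LinearMap.sub_apply, huv, hv, sub_self]
  · simp [lorentz_comm v u, hu, hv, huv]

/-! ### The hyperboloid model -/

/-- The point of the hyperboloid `lorentz u u = 1`, `0 < u 0` corresponding to a point of the upper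
half-plane; geodesics become intersections with planes through the origin. -/
noncomputable def toHyperboloid (z : UpperHalfPlane) : Fin 3 → ℝ :=
  ![(z.re ^ 2 + z.im ^ 2 + 1) / (2 * z.im), (z.re ^ 2 + z.im ^ 2 - 1) / (2 * z.im), z.re / z.im]

theorem lorentz_toHyperboloid (z w : UpperHalfPlane) :
    lorentz (toHyperboloid z) (toHyperboloid w) = cosh (dist z w) := by
  have hz := z.im_ne_zero
  have hw := w.im_ne_zero
  simp only [lorentz_apply, toHyperboloid, UpperHalfPlane.cosh_dist', Matrix.cons_val]
  field_simp
  ring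

theorem lorentz_toHyperboloid_self (z : UpperHalfPlane) :
    lorentz (toHyperboloid z) (toHyperboloid z) = 1 := by
  simp [lorentz_toHyperboloid]

theorem toHyperboloid_zero_pos (z : UpperHalfPlane) : 0 < toHyperboloid z 0 := by
  have := z.im_pos
  simp only [toHyperboloid, Matrix.cons_val]
  positivity

theorem toHyperboloid_injective : Function.Injective toHyperboloid := fun z w h => by
  have : cosh (dist z w) = 1 := by rw [← lorentz_toHyperboloid, h, lorentz_toHyperboloid_self]
  by_contra hne
  exact (one_lt_cosh.2 (dist_pos.2 hne).ne').ne' this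

theorem exists_toHyperboloid_eq {u : Fin 3 → ℝ} (h0 : 0 < u 0) (hu : lorentz u u = 1) :
    ∃ z, toHyperboloid z = u := by
  rw [lorentz_apply] at hu
  have hpos : 0 < u 0 - u 1 := by nlinarith [sq_nonneg (u 2)]
  refine ⟨⟨⟨u 2 / (u 0 - u 1), 1 / (u 0 - u 1)⟩, by simpa using hpos⟩, ?_⟩
  ext i
  fin_cases i <;>
  simp only [toHyperboloid, UpperHalfPlane.re, UpperHalfPlane.im, Fin.zero_eta, Fin.mk_one,
    Fin.reduceFinMk, Matrix.cons_val] <;>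
  field_simp <;> linarith

theorem exists_toHyperboloid_eq_smul {u : Fin 3 → ℝ} (h0 : 0 < u 0) (hu : 0 < lorentz u u) :
    ∃ z, ∃ k : ℝ, 0 < k ∧ toHyperboloid z = k • u := by
  have hk : 0 < (√(lorentz u u))⁻¹ := inv_pos.2 (sqrt_pos.2 hu)
  obtain ⟨z, hz⟩ := exists_toHyperboloid_eq (u := (√(lorentz u u))⁻¹ • u) (mul_pos hk h0) (by
    simp only [map_smul, LinearMap.smul_apply, smul_eq_mul]
    rw [← mul_assoc, ← mul_inv, mul_self_sqrt hu.le, inv_mul_cancel₀ hu.ne'])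
  exact ⟨z, _, hk, hz⟩

theorem lorentz_smul_add_smul_self (A B : UpperHalfPlane) (α β : ℝ) :
    lorentz (α • toHyperboloid A + β • toHyperboloid B)
      (α • toHyperboloid A + β • toHyperboloid B) =
        α ^ 2 + β ^ 2 + 2 * α * β * cosh (dist A B) := by
  simp only [map_add, map_smul, LinearMap.add_apply, LinearMap.smul_apply, smul_eq_mul,
    lorentz_toHyperboloid, dist_self, cosh_zero, dist_comm B A]
  ring

/-! ### Segments, collinearity and cones -/

theorem mem_GSeg_of_toHyperboloid_eq {A B z : UpperHalfPlane} {α β : ℝ} (hα : 0 ≤ α) (hβ : 0 ≤ β)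
    (h : toHyperboloid z = α • toHyperboloid A + β • toHyperboloid B) : z ∈ GSeg A B := by
  have hunit := lorentz_smul_add_smul_self A B α β
  rw [← h, lorentz_toHyperboloid_self] at hunit
  have cosh_Az : cosh (dist A z) = α + β * cosh (dist A B) := by
    simp [← lorentz_toHyperboloid, h, lorentz_toHyperboloid_self]
  have cosh_zB : cosh (dist z B) = α * cosh (dist A B) + β := by
    simp [← lorentz_toHyperboloid, h, lorentz_toHyperboloid_self]
  have sinh_dist_nonneg (x y : UpperHalfPlane) : 0 ≤ sinh (dist x y) :=
    sinh_nonneg_iff.2 dist_nonneg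
  have sinh_Az : sinh (dist A z) = β * sinh (dist A B) := by
    rw [← sq_eq_sq₀ (sinh_dist_nonneg A z) (mul_nonneg hβ (sinh_dist_nonneg A B)), mul_pow,
      sinh_sq, sinh_sq, cosh_Az]
    linarith
  have sinh_zB : sinh (dist z B) = α * sinh (dist A B) := by
    rw [← sq_eq_sq₀ (sinh_dist_nonneg z B) (mul_nonneg hα (sinh_dist_nonneg A B)), mul_pow,
      sinh_sq, sinh_sq, cosh_zB]
    linarith
  have hcosh : cosh (dist A z + dist z B) = cosh (dist A B) := by
    rw [cosh_add, sinh_Az, sinh_zB, cosh_Az, cosh_zB]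
    linear_combination -cosh (dist A B) * hunit + α * β * sinh_sq (dist A B)
  exact cosh_strictMonoOn.injOn (Set.mem_Ici.2 (by positivity)) (Set.mem_Ici.2 dist_nonneg) hcosh

theorem exists_toHyperboloid_eq_of_mem_GSeg {A B z : UpperHalfPlane} (h : z ∈ GSeg A B) :
    ∃ α β : ℝ, 0 ≤ α ∧ 0 ≤ β ∧
      toHyperboloid z = α • toHyperboloid A + β • toHyperboloid B := by
  have hdist : dist A B = dist A z + dist z B := Eq.symm h
  obtain rfl | hAB := eq_or_ne A B
  · have hz : z = A := by
      have hz : dist A z + dist z A = 0 := h.trans (dist_self A)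
      exact (dist_le_zero.1 (by linarith [dist_nonneg (x := A) (y := z)]))
    exact ⟨1, 0, zero_le_one, le_rfl, by simp [hz]⟩
  have hS : 0 < sinh (dist A B) := sinh_pos_iff.2 (dist_pos.2 hAB)
  refine ⟨sinh (dist z B) / sinh (dist A B), sinh (dist A z) / sinh (dist A B),
    div_nonneg (sinh_nonneg_iff.2 dist_nonneg) hS.le,
    div_nonneg (sinh_nonneg_iff.2 dist_nonneg) hS.le,
    eq_of_lorentz_eq_one (lorentz_toHyperboloid_self z) ?_ ?_⟩
  · rw [lorentz_smul_add_smul_self]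
    field_simp
    rw [hdist, sinh_add, cosh_add]
    linear_combination sinh (dist z B) ^ 2 * sinh_sq (dist A z) +
      sinh (dist A z) ^ 2 * sinh_sq (dist z B)
  · simp only [map_add, map_smul, smul_eq_mul, lorentz_toHyperboloid, dist_comm z A]
    field_simp
    rw [hdist, sinh_add]
    ring

theorem mem_GSeg_of_relation {A B C : UpperHalfPlane} {x y z : ℝ} (hx : x ≠ 0) (hxy : x * y ≤ 0)
    (hxz : x * z ≤ 0)
    (h : x • toHyperboloid A + y • toHyperboloid B + z • toHyperboloid C = 0) : A ∈ GSeg B C := by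
  have coeff_nonneg {t : ℝ} (ht : x * t ≤ 0) : 0 ≤ -t / x := by
    rw [← mul_div_mul_left _ _ hx]
    exact div_nonneg (by linarith) (mul_self_nonneg x)
  refine mem_GSeg_of_toHyperboloid_eq (coeff_nonneg hxy) (coeff_nonneg hxz) ?_
  rw [add_assoc, add_eq_zero_iff_eq_neg] at h
  rw [← inv_smul_smul₀ hx (toHyperboloid A), h]
  module

theorem mem_GSeg_of_relation_of_mul_pos {A B C : UpperHalfPlane} {x y z : ℝ} (hyz : 0 < y * z)
    (h : x • toHyperboloid A + y • toHyperboloid B + z • toHyperboloid C = 0) : A ∈ GSeg B C := by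
  have hA := toHyperboloid_zero_pos A
  have hB := toHyperboloid_zero_pos B
  have hC := toHyperboloid_zero_pos C
  have htime : x * toHyperboloid A 0 + y * toHyperboloid B 0 + z * toHyperboloid C 0 = 0 := by
    simpa using congrFun h 0
  have hxy : x * y < 0 := by
    refine neg_of_mul_neg_left (b := toHyperboloid A 0) ?_ hA.le
    rw [show x * y * toHyperboloid A 0 = -(y ^ 2 * toHyperboloid B 0 + y * z * toHyperboloid C 0) by
      linear_combination y * htime]
    exact neg_neg_of_pos (by positivity)
  have hxz : x * z < 0 := by
    refine neg_of_mul_neg_left (b := toHyperboloid A 0) ?_ hA.le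
    rw [show x * z * toHyperboloid A 0 = -(y * z * toHyperboloid B 0 + z ^ 2 * toHyperboloid C 0) by
      linear_combination z * htime]
    exact neg_neg_of_pos (by positivity)
  exact mem_GSeg_of_relation (left_ne_zero_of_mul hxy.ne) hxy.le hxz.le h

theorem hCollinear_of_relation {A B C : UpperHalfPlane} {x y z : ℝ}
    (h : x • toHyperboloid A + y • toHyperboloid B + z • toHyperboloid C = 0)
    (h0 : x ≠ 0 ∨ y ≠ 0 ∨ z ≠ 0) : HCollinear A B C := by
  have hB : y • toHyperboloid B + x • toHyperboloid A + z • toHyperboloid C = 0 := by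
    rw [← h]; abel
  have hC : z • toHyperboloid C + x • toHyperboloid A + y • toHyperboloid B = 0 := by
    rw [← h]; abel
  by_cases hyz : 0 < y * z
  · exact Or.inl (mem_GSeg_of_relation_of_mul_pos hyz h)
  by_cases hxz : 0 < x * z
  · exact Or.inr (Or.inl (mem_GSeg_of_relation_of_mul_pos hxz hB))
  by_cases hxy : 0 < x * y
  · exact Or.inr (Or.inr (mem_GSeg_of_relation_of_mul_pos hxy hC))
  rw [not_lt] at hyz hxz hxy
  rcases h0 with hx | hy | hz
  · exact Or.inl (mem_GSeg_of_relation hx hxy hxz h)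
  · exact Or.inr (Or.inl (mem_GSeg_of_relation hy (by rwa [mul_comm]) hyz hB))
  · exact Or.inr (Or.inr (mem_GSeg_of_relation hz (by rwa [mul_comm]) (by rwa [mul_comm]) hC))

theorem hCollinear_of_triple_product_eq_zero {A B C : UpperHalfPlane}
    (h : toHyperboloid A ⬝ᵥ toHyperboloid B ⨯₃ toHyperboloid C = 0) : HCollinear A B C := by
  rw [triple_product_eq_det] at h
  obtain ⟨v, hv, hvM⟩ := Matrix.exists_vecMul_eq_zero_iff.2 h
  refine hCollinear_of_relation (x := v 0) (y := v 1) (z := v 2) ?_ ?_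
  · ext i
    simpa [Matrix.vecMul, dotProduct, Fin.sum_univ_three] using congrFun hvM i
  · by_contra! h0
    exact hv (by ext i; fin_cases i <;> simp [h0])

theorem exists_mem_GSeg_hCollinear {A B C D : UpperHalfPlane}
    (h : (toHyperboloid C ⬝ᵥ toHyperboloid A ⨯₃ toHyperboloid B) *
      (toHyperboloid D ⬝ᵥ toHyperboloid A ⨯₃ toHyperboloid B) < 0) :
    ∃ z ∈ GSeg C D, HCollinear z A B := by
  set c := toHyperboloid C ⬝ᵥ toHyperboloid A ⨯₃ toHyperboloid B
  set d := toHyperboloid D ⬝ᵥ toHyperboloid A ⨯₃ toHyperboloid B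
  have hα : 0 < d ^ 2 := pow_two_pos_of_ne_zero (right_ne_zero_of_mul h.ne)
  have hβ : 0 < -(c * d) := neg_pos.2 h
  have htime : 0 < (d ^ 2 • toHyperboloid C + -(c * d) • toHyperboloid D) 0 :=
    add_pos (mul_pos hα (toHyperboloid_zero_pos C)) (mul_pos hβ (toHyperboloid_zero_pos D))
  obtain ⟨z, k, hk, hz⟩ := exists_toHyperboloid_eq_smul htime (by
    rw [lorentz_smul_add_smul_self]
    have := cosh_pos (dist C D)
    positivity)
  refine ⟨z, mem_GSeg_of_toHyperboloid_eq (mul_pos hk hα).le (mul_pos hk hβ).le ?_, ?_⟩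
  · rw [hz]
    module
  · refine hCollinear_of_triple_product_eq_zero ?_
    rw [hz, smul_dotProduct, add_dotProduct, smul_dotProduct, smul_dotProduct]
    change k * (d ^ 2 * c + -(c * d) * d) = 0
    ring

theorem exists_toHyperboloid_eq_of_mem_HCone {V A B z : UpperHalfPlane} (hV : V ∉ GSeg A B)
    (h : z ∈ HCone V A B) :
    ∃ α β σ : ℝ, 0 ≤ α ∧ 0 ≤ β ∧
      toHyperboloid z = α • toHyperboloid A + β • toHyperboloid B + σ • toHyperboloid V := by
  obtain ⟨w, hw, hVwz | hVzw⟩ := h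
  · obtain ⟨α, β, hα, hβ, hw_eq⟩ := exists_toHyperboloid_eq_of_mem_GSeg hw
    obtain ⟨s, t, -, ht, hw_eq'⟩ := exists_toHyperboloid_eq_of_mem_GSeg hVwz
    have ht : 0 < t := by
      refine ht.lt_of_ne' fun ht0 => hV ?_
      have htime := congrFun hw_eq' 0
      simp only [ht0, zero_smul, add_zero, Pi.smul_apply, smul_eq_mul] at htime hw_eq'
      have hs : 0 < s :=
        pos_of_mul_pos_left (htime ▸ toHyperboloid_zero_pos w) (toHyperboloid_zero_pos V).le
      refine mem_GSeg_of_toHyperboloid_eq (α := s⁻¹ * α) (β := s⁻¹ * β) (by positivity)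
        (by positivity) ?_
      rw [← inv_smul_smul₀ hs.ne' (toHyperboloid V), ← hw_eq', hw_eq]
      module
    refine ⟨α / t, β / t, -s / t, by positivity, by positivity, ?_⟩
    rw [← inv_smul_smul₀ ht.ne' (toHyperboloid z), eq_sub_of_add_eq' hw_eq'.symm, hw_eq]
    module
  · obtain ⟨α, β, hα, hβ, hw_eq⟩ := exists_toHyperboloid_eq_of_mem_GSeg hw
    obtain ⟨s, t, -, ht, hz_eq⟩ := exists_toHyperboloid_eq_of_mem_GSeg hVzw
    refine ⟨t * α, t * β, s, by positivity, by positivity, ?_⟩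
    rw [hz_eq, hw_eq]
    module

/-! ### Convex cycles of vectors -/

theorem exists_eq_add_natCast {n : ℕ} [NeZero n] (c i : ZMod n) : ∃ t < n, i = c + (t : ZMod n) :=
  ⟨(i - c).val, ZMod.val_lt _, by rw [ZMod.natCast_zmod_val]; ring⟩

theorem add_natCast_ne {n s t : ℕ} (c : ZMod n) (hs : s < n) (ht : t < n) (hst : s ≠ t) :
    c + (s : ZMod n) ≠ c + (t : ZMod n) := fun h =>
  hst (CharP.natCast_injOn_Iio (ZMod n) n hs ht (add_left_cancel h))

theorem add_natCast_ne_self {n t : ℕ} (c : ZMod n) (ht : 0 < t) (htn : t < n) :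
    c + (t : ZMod n) ≠ c := by
  simpa using add_natCast_ne c htn (ht.trans htn) ht.ne'

theorem add_one_ne_self {n : ℕ} (hn : 1 < n) (i : ZMod n) : i + 1 ≠ i := by
  simpa using add_natCast_ne_self i one_pos hn

theorem add_two_ne_self {n : ℕ} (hn : 2 < n) (i : ZMod n) : i + 2 ≠ i := by
  simpa using add_natCast_ne_self i two_pos hn

theorem add_two_ne_add_one {n : ℕ} (hn : 1 < n) (i : ZMod n) : i + 2 ≠ i + 1 := by
  simpa [add_assoc, one_add_one_eq_two] using add_one_ne_self hn (i + 1)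

section SideNormal

variable {K : Type*} [CommRing K] {n : ℕ}

theorem triple_product_plucker (a b x y z : Fin 3 → K) :
    (a ⬝ᵥ b ⨯₃ y) * (a ⬝ᵥ x ⨯₃ z) =
      (a ⬝ᵥ b ⨯₃ x) * (a ⬝ᵥ y ⨯₃ z) + (a ⬝ᵥ b ⨯₃ z) * (a ⬝ᵥ x ⨯₃ y) := by
  simp only [cross_apply, Matrix.vec3_dotProduct, Matrix.cons_val]
  ring

/-- The normal to the `i`-th face of the polyhedral cone in `K³` over the closed polygon `w`. -/
def sideNormal (w : ZMod n → Fin 3 → K) (i : ZMod n) : Fin 3 → K :=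
  w i ⨯₃ w (i + 1)

theorem sideNormal_cross_sideNormal (w : ZMod n → Fin 3 → K) (i : ZMod n) :
    sideNormal w i ⨯₃ sideNormal w (i + 1) = (w i ⬝ᵥ sideNormal w (i + 1)) • w (i + 1) := by
  have hperp : w (i + 1) ⬝ᵥ sideNormal w (i + 1) = 0 := dot_self_cross _ _
  rw [sideNormal, cross_cross_eq_smul_sub_smul, hperp, zero_smul, sub_zero]

end SideNormal

section StrictConvexCycle

variable {K : Type*} [CommRing K] [LinearOrder K] {n : ℕ} {w : ZMod n → Fin 3 → K}

/-- The cone in `K³` over the closed polygon `w` is strictly convex and positively oriented: every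
vertex lies strictly on the positive side of the plane of each side not containing it. -/
def StrictConvexCycle (w : ZMod n → Fin 3 → K) : Prop :=
  ∀ i j, j ≠ i → j ≠ i + 1 → 0 < w j ⬝ᵥ sideNormal w i

theorem StrictConvexCycle.dotProduct_sideNormal_nonneg (hw : StrictConvexCycle w) (i j : ZMod n) :
    0 ≤ w j ⬝ᵥ sideNormal w i := by
  by_cases hji : j = i
  · simp [hji, sideNormal]
  by_cases hji' : j = i + 1
  · simp [hji', sideNormal]
  exact (hw i j hji hji').le

variable [IsStrictOrderedRing K]

theorem StrictConvexCycle.triple_product_pos (hw : StrictConvexCycle w) (c : ZMod n) {s t : ℕ}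
    (hs : 0 < s) (hst : s < t) (htn : t < n) : 0 < w c ⬝ᵥ w (c + s) ⨯₃ w (c + t) := by
  have hfirst {r : ℕ} (hr : 1 < r) (hrn : r < n) : 0 < w c ⬝ᵥ w (c + 1) ⨯₃ w (c + r) := by
    rw [triple_product_permutation, triple_product_permutation]
    exact hw c (c + r) (add_natCast_ne_self c (by omega) hrn)
      (by simpa using add_natCast_ne c hrn (by omega : 1 < n) hr.ne')
  have hside {r : ℕ} (hr : 0 < r) (hrn : r + 1 < n) :
      0 < w c ⬝ᵥ w (c + r) ⨯₃ w (c + (r + 1 : ℕ)) := by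
    have := hw (c + r) c (add_natCast_ne_self c hr (by omega)).symm
      (by simpa [add_assoc] using (add_natCast_ne_self c (by omega) hrn).symm)
    rwa [sideNormal, add_assoc, ← Nat.cast_succ] at this
  obtain rfl | hs1 := (Nat.succ_le_of_lt hs).eq_or_lt
  · simpa using hfirst hst htn
  induction t, hst using Nat.le_induction with
  | base => exact hside hs htn
  | succ t hst ih =>
    have hprod : 0 < (w c ⬝ᵥ w (c + 1) ⨯₃ w (c + t)) *
        (w c ⬝ᵥ w (c + s) ⨯₃ w (c + (t + 1 : ℕ))) := by
      rw [triple_product_plucker]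
      exact add_pos (mul_pos (hfirst hs1 (by omega)) (hside (by omega) htn))
        (mul_pos (hfirst (by omega) htn) (ih (by omega)))
    exact pos_of_mul_pos_right hprod (hfirst (by omega) (by omega)).le

theorem StrictConvexCycle.dual (hw : StrictConvexCycle w) (hn : 3 ≤ n) :
    StrictConvexCycle (sideNormal w) := by
  intro i j hji hji'
  change 0 < sideNormal w j ⬝ᵥ sideNormal w i ⨯₃ sideNormal w (i + 1)
  rw [sideNormal_cross_sideNormal, dotProduct_smul, smul_eq_mul,
    dotProduct_comm (sideNormal w j)]
  refine mul_pos (hw _ _ (add_one_ne_self (by omega) i).symm ?_)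
    (hw _ _ hji'.symm (by simpa using hji.symm))
  rw [add_assoc, one_add_one_eq_two]
  exact (add_two_ne_self hn i).symm

-- Paired with the normal to the plane of the two vectors where the sign of `l` changes, every term
-- of the sum is nonpositive.
theorem StrictConvexCycle.sum_smul_ne_zero_of_two_sign_changes [NeZero n] (hw : StrictConvexCycle w)
    (hn : 3 ≤ n) {l : ZMod n → K} {c : ZMod n} {k : ℕ} (hk : 0 < k) (hkn : k < n)
    (hpos : ∀ t < k, 0 < l (c + t)) (hneg : ∀ t, k ≤ t → t < n → l (c + t) < 0) :
    ∑ i, l i • w i ≠ 0 := by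
  set x := w c ⨯₃ w (c + k)
  have hterm {t : ℕ} (htn : t < n) (ht : t ≠ 0) (htk : t ≠ k) :
      l (c + t) * w (c + t) ⬝ᵥ x < 0 := by
    obtain hlt | hlt := htk.lt_or_gt
    · refine mul_neg_of_pos_of_neg (hpos t hlt) ?_
      rw [triple_product_permutation, ← cross_anticomm, dotProduct_neg, neg_lt_zero]
      exact hw.triple_product_pos c (Nat.pos_of_ne_zero ht) hlt hkn
    · refine mul_neg_of_neg_of_pos (hneg t hlt.le htn) ?_
      rw [triple_product_permutation]
      exact hw.triple_product_pos c hk hlt htn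
  have hterm' (i : ZMod n) : l i * w i ⬝ᵥ x ≤ 0 := by
    obtain ⟨t, htn, rfl⟩ := exists_eq_add_natCast c i
    rcases eq_or_ne t 0 with rfl | ht
    · simp [x]
    rcases eq_or_ne t k with rfl | htk
    · simp [x]
    exact (hterm htn ht htk).le
  obtain ⟨t, htn, ht, htk⟩ : ∃ t < n, t ≠ 0 ∧ t ≠ k := by
    by_cases h1 : k = 1
    · exact ⟨2, by omega, by omega, by omega⟩
    · exact ⟨1, by omega, by omega, by omega⟩
  intro hsum
  have hlt : ∑ i, l i * w i ⬝ᵥ x < 0 :=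
    Finset.sum_neg' (fun i _ => hterm' i) ⟨c + t, Finset.mem_univ _, hterm htn ht htk⟩
  refine hlt.ne ?_
  simpa [sum_dotProduct] using congrArg (· ⬝ᵥ x) hsum

end StrictConvexCycle

/-! ### Local extrema of cyclic sequences -/

section LocalExtrema

variable {n : ℕ} [NeZero n] {α : Type*} [LinearOrder α]

/-- The strict local maxima of a cyclic sequence. -/
def localMaxima (f : ZMod n → α) : Set (ZMod n) :=
  {i | f (i - 1) < f i ∧ f (i + 1) < f i}

theorem unimodal_of_ncard_localMaxima_lt_two {f : ZMod n → α} (hne : ∀ i, f i ≠ f (i + 1))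
    (hmax : (localMaxima f).ncard < 2) :
    ∃ (c : ZMod n) (k : ℕ), 0 < k ∧ k < n ∧ (∀ t < k, f (c + t + 1) < f (c + t)) ∧
      ∀ t : ℕ, k ≤ t → t < n → f (c + t) < f (c + t + 1) := by
  classical
  obtain ⟨c, hc⟩ := Finite.exists_max f
  have hc_mem : c ∈ localMaxima f :=
    ⟨(hc _).lt_of_ne (by simpa using hne (c - 1)), (hc _).lt_of_ne (hne c).symm⟩
  have huniq {i : ZMod n} (hi : i ∈ localMaxima f) : i = c :=
    (Set.ncard_le_one (Set.toFinite _)).1 (Nat.le_of_lt_succ hmax) i hi c hc_mem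
  have hn : 0 < n := Nat.pos_of_ne_zero (NeZero.ne n)
  have hlast : f (c + (n - 1 : ℕ)) < f (c + (n - 1 : ℕ) + 1) := by
    simpa [Nat.cast_pred hn, ← sub_eq_add_neg] using hc_mem.1
  have hascent : ∃ t : ℕ, f (c + t) < f (c + t + 1) := ⟨n - 1, hlast⟩
  refine ⟨c, Nat.find hascent, ?_, ?_, fun t ht => ?_, fun t ht => ?_⟩
  · rw [Nat.find_pos]
    simpa using (hc_mem.2).le
  · exact (Nat.find_min' hascent hlast).trans_lt (Nat.pred_lt hn.ne')
  · exact (not_lt.1 (Nat.find_min hascent ht)).lt_of_ne (hne _).symm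
  · induction t, ht using Nat.le_induction with
    | base => exact fun _ => Nat.find_spec hascent
    | succ t _ ih =>
      intro htn
      refine (lt_or_gt_of_ne (hne _)).resolve_right fun hdescent => ?_
      have hmem : c + (t + 1 : ℕ) ∈ localMaxima f :=
        ⟨by simpa [← add_assoc] using ih (by omega), hdescent⟩
      exact add_natCast_ne_self c t.succ_pos htn (huniq hmem)

theorem StrictConvexCycle.two_le_ncard_localMaxima {K : Type*} [CommRing K] [LinearOrder K]
    [IsStrictOrderedRing K] {w : ZMod n → Fin 3 → K} (hw : StrictConvexCycle w) (hn : 3 ≤ n)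
    {l : ZMod n → K} (hsum : ∑ i, l i • w i = 0) {f : ZMod n → α}
    (hl : ∀ i, (0 < l i ∧ f (i + 1) < f i) ∨ (l i < 0 ∧ f i < f (i + 1))) :
    2 ≤ (localMaxima f).ncard := by
  by_contra! hlt
  obtain ⟨c, k, hk, hkn, hdesc, hasc⟩ := unimodal_of_ncard_localMaxima_lt_two
    (fun i => (hl i).elim (fun h => h.2.ne') (fun h => h.2.ne)) hlt
  refine hw.sum_smul_ne_zero_of_two_sign_changes hn hk hkn (c := c) (fun t ht => ?_)
    (fun t ht htn => ?_) hsum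
  · exact ((hl _).resolve_right fun h => h.2.asymm (hdesc t ht)).1
  · exact ((hl _).resolve_left fun h => h.2.asymm (hasc t ht htn)).1

theorem StrictConvexCycle.two_le_ncard_localExtrema {K : Type*} [CommRing K] [LinearOrder K]
    [IsStrictOrderedRing K] {w : ZMod n → Fin 3 → K} (hw : StrictConvexCycle w) (hn : 3 ≤ n)
    {l : ZMod n → K} (hsum : ∑ i, l i • w i = 0) {f : ZMod n → α}
    (hl : ∀ i, (0 < l i ∧ f (i + 1) < f i) ∨ (l i < 0 ∧ f i < f (i + 1))) :
    2 ≤ {i | f (i - 1) < f i ∧ f (i + 1) < f i}.ncard ∧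
      2 ≤ {i | f i < f (i - 1) ∧ f i < f (i + 1)}.ncard :=
  ⟨hw.two_le_ncard_localMaxima hn hsum hl,
    hw.two_le_ncard_localMaxima hn (l := -l) (f := OrderDual.toDual ∘ f) (by simp [hsum])
      fun i => (hl i).symm.imp (And.imp_left neg_pos.2) (And.imp_left neg_lt_zero.2)⟩

end LocalExtrema

/-! ### Orientation of a polygon -/

theorem eq_of_cyclic_const {n : ℕ} [NeZero n] (hn : 3 ≤ n) {α : Type*} {s : ZMod n → ZMod n → α}
    (hs : ∀ i j, j ≠ i → j ≠ i + 1 → j + 1 ≠ i → s i j = s i (j + 1))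
    (hs' : ∀ i, s (i + 1) i = s i (i + 2)) {i j : ZMod n} (hji : j ≠ i) (hji' : j ≠ i + 1) :
    s i j = s 0 2 := by
  have hfrom_two {t : ℕ} (ht : 2 ≤ t) (htn : t < n) (i : ZMod n) : s i (i + t) = s i (i + 2) := by
    induction t, ht using Nat.le_induction with
    | base => simp
    | succ t ht ih =>
      rw [← ih (by omega), hs i (i + t) (add_natCast_ne_self i (by omega) (by omega))
        (by simpa using add_natCast_ne i (by omega : t < n) (by omega : 1 < n) (by omega))
        (by simpa [add_assoc] using add_natCast_ne_self i t.succ_pos htn), Nat.cast_succ, add_assoc]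
  have hrow {i j : ZMod n} (hji : j ≠ i) (hji' : j ≠ i + 1) : s i j = s i (i + 2) := by
    obtain ⟨t, htn, rfl⟩ := exists_eq_add_natCast i j
    refine hfrom_two ?_ htn i
    by_contra! ht
    interval_cases t <;> simp at hji hji'
  have hperiodic : Function.Periodic (fun i => s i (i + 2)) 1 := fun i => by
    change s (i + 1) (i + 1 + 2) = s i (i + 2)
    rw [← hs' i, hrow (add_one_ne_self (by omega) i).symm]
    simpa [add_assoc, one_add_one_eq_two] using (add_two_ne_self hn i).symm
  obtain ⟨t, -, rfl⟩ := exists_eq_add_natCast 0 i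
  rw [hrow hji hji']
  simpa using hperiodic.nat_mul_eq t

theorem exists_strictConvexCycle_smul {K : Type*} [CommRing K] [LinearOrder K]
    [IsStrictOrderedRing K] {n : ℕ} [NeZero n] (hn : 3 ≤ n) {w : ZMod n → Fin 3 → K}
    (hne : ∀ i j, j ≠ i → j ≠ i + 1 → w j ⬝ᵥ sideNormal w i ≠ 0)
    (hside : ∀ i j, j ≠ i → j ≠ i + 1 → j + 1 ≠ i →
      0 < (w j ⬝ᵥ sideNormal w i) * (w (j + 1) ⬝ᵥ sideNormal w i)) :
    ∃ ε : K, ε * ε = 1 ∧ StrictConvexCycle fun i => ε • w i := by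
  set ε := SignType.sign (w 2 ⬝ᵥ sideNormal w 0)
  have hsign {i j : ZMod n} (hji : j ≠ i) (hji' : j ≠ i + 1) :
      SignType.sign (w j ⬝ᵥ sideNormal w i) = ε := by
    refine eq_of_cyclic_const hn (s := fun i j => SignType.sign (w j ⬝ᵥ sideNormal w i))
      (fun i j hji hji' hij => ?_) (fun i => ?_) hji hji'
    · obtain ⟨h₁, h₂⟩ | ⟨h₁, h₂⟩ := mul_pos_iff.1 (hside i j hji hji' hij)
      · rw [sign_pos h₁, sign_pos h₂]
      · rw [sign_neg h₁, sign_neg h₂]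
    · simp only [sideNormal, add_assoc, one_add_one_eq_two]
      rw [triple_product_permutation, triple_product_permutation]
  have hε_mul : (ε * ε : K) = 1 := by
    obtain h | h := lt_or_gt_of_ne <| hne 0 2 (by simpa using add_two_ne_self hn 0)
        (by simpa using add_two_ne_add_one (n := n) (by omega) 0)
    · simp [ε, sign_neg h]
    · simp [ε, sign_pos h]
  refine ⟨ε, hε_mul, fun i j hji hji' => ?_⟩
  simp only [sideNormal, map_smul, LinearMap.smul_apply, smul_dotProduct, dotProduct_smul,
    smul_eq_mul]
  rw [← mul_assoc, hε_mul, one_mul, ← hsign hji hji', sideNormal, sign_mul_self]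
  exact abs_pos.2 (hne i j hji hji')

/-! ### Poles of circumcircles -/

theorem exists_eq_smul_cross {K : Type*} [Field K] {u v m : Fin 3 → K} (huv : u ⨯₃ v ≠ 0)
    (hu : u ⬝ᵥ m = 0) (hv : v ⬝ᵥ m = 0) : ∃ l : K, m = l • u ⨯₃ v := by
  have hparallel : (u ⨯₃ v) ⨯₃ m = 0 := by
    rw [cross_cross_eq_smul_sub_smul, hu, hv, zero_smul, zero_smul, sub_zero]
  by_contra! hne
  exact crossProduct_ne_zero_iff_linearIndependent.2
    ((LinearIndependent.pair_iff' huv).2 fun l => (hne l).symm) hparallel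

theorem exists_lorentzDual_sub_eq_smul_cross {u v P Q : Fin 3 → ℝ} (huv : u ⨯₃ v ≠ 0)
    (hu : 0 < lorentz u u) (hPQu : lorentz P u = lorentz Q u) (hPQv : lorentz P v = lorentz Q v)
    (hP : 0 ≤ P ⬝ᵥ u ⨯₃ v) (hQ : 0 ≤ Q ⬝ᵥ u ⨯₃ v) (hPQ : P ≠ Q) :
    ∃ l : ℝ, lorentzDual (Q - P) = l • u ⨯₃ v ∧
      (0 < l ∧ lorentz P P < lorentz Q Q ∨ l < 0 ∧ lorentz Q Q < lorentz P P) := by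
  have orthogonal {x : Fin 3 → ℝ} (h : lorentz P x = lorentz Q x) : lorentz (Q - P) x = 0 := by
    rw [map_sub, LinearMap.sub_apply, h, sub_self]
  obtain ⟨l, hl⟩ := exists_eq_smul_cross (m := lorentzDual (Q - P)) huv
    (by rw [dotProduct_lorentzDual, lorentz_comm, orthogonal hPQu])
    (by rw [dotProduct_lorentzDual, lorentz_comm, orthogonal hPQv])
  have lorentz_sub (x : Fin 3 → ℝ) : lorentz x (Q - P) = l * x ⬝ᵥ u ⨯₃ v := by
    rw [← dotProduct_lorentzDual, hl, dotProduct_smul, smul_eq_mul]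
  have hneg : l * (Q ⬝ᵥ u ⨯₃ v - P ⬝ᵥ u ⨯₃ v) < 0 := by
    rw [← sub_dotProduct, ← lorentz_sub]
    exact lorentz_self_neg_of_orthogonal hu (orthogonal hPQu) (sub_ne_zero.2 hPQ.symm)
  have hdiff : lorentz Q Q - lorentz P P = l * (P ⬝ᵥ u ⨯₃ v + Q ⬝ᵥ u ⨯₃ v) := by
    rw [← add_dotProduct, ← lorentz_sub]
    simp only [map_add, map_sub, LinearMap.add_apply, lorentz_comm Q P]
    ring
  refine ⟨l, hl, ?_⟩
  obtain ⟨hl, hlt⟩ | ⟨hl, hlt⟩ := mul_neg_iff.1 hneg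
  · exact Or.inl ⟨hl, sub_pos.1 (hdiff ▸ mul_pos hl (by linarith))⟩
  · exact Or.inr ⟨hl, sub_neg.1 (hdiff ▸ mul_neg_of_neg_of_pos hl (by linarith))⟩

theorem two_le_ncard_localExtrema_of_poles {n : ℕ} [NeZero n] (hn : 3 ≤ n)
    {w P : ZMod n → Fin 3 → ℝ} (hw : StrictConvexCycle w) (hw_pos : ∀ i, 0 < lorentz (w i) (w i))
    (hP_prev : ∀ i, lorentz (P i) (w (i - 1)) = 1) (hP_self : ∀ i, lorentz (P i) (w i) = 1)
    (hP_next : ∀ i, lorentz (P i) (w (i + 1)) = 1) (hP_ne : ∀ i, P i ≠ P (i + 1))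
    (hP_cone : ∀ i, ∃ α β σ : ℝ, 0 ≤ α ∧ 0 ≤ β ∧
      P i = α • w (i - 1) + β • w (i + 1) + σ • w i)
    {R : ZMod n → ℝ} (hR : ∀ i j, lorentz (P i) (P i) < lorentz (P j) (P j) → R j < R i) :
    2 ≤ {i | R (i - 1) < R i ∧ R (i + 1) < R i}.ncard ∧
      2 ≤ {i | R i < R (i - 1) ∧ R i < R (i + 1)}.ncard := by
  have hnormal (i : ZMod n) : w i ⨯₃ w (i + 1) ≠ 0 := fun h => by
    have := hw i (i + 2) (add_two_ne_self hn i) (add_two_ne_add_one (by omega) i)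
    simp [sideNormal, h] at this
  have hP_dot (i : ZMod n) : 0 ≤ P i ⬝ᵥ sideNormal w i := by
    obtain ⟨α, β, σ, hα, -, h⟩ := hP_cone i
    simpa [h, sideNormal] using mul_nonneg hα (hw.dotProduct_sideNormal_nonneg i (i - 1))
  have hP_dot_succ (i : ZMod n) : 0 ≤ P (i + 1) ⬝ᵥ sideNormal w i := by
    obtain ⟨α, β, σ, -, hβ, h⟩ := hP_cone (i + 1)
    simpa [h, sideNormal] using mul_nonneg hβ (hw.dotProduct_sideNormal_nonneg i (i + 1 + 1))
  choose l hl hlR using fun i => exists_lorentzDual_sub_eq_smul_cross (hnormal i) (hw_pos i)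
    ((hP_self i).trans (by simpa using (hP_prev (i + 1)).symm))
    ((hP_next i).trans (hP_self (i + 1)).symm) (hP_dot i) (hP_dot_succ i) (hP_ne i)
  have hclosed : ∑ i, l i • sideNormal w i = 0 := by
    simp only [sideNormal, ← hl, map_sub, Finset.sum_sub_distrib, sub_eq_zero]
    exact Equiv.sum_comp (Equiv.addRight (1 : ZMod n)) fun i => lorentzDual (P i)
  exact (hw.dual hn).two_le_ncard_localExtrema hn hclosed fun i =>
    (hlR i).imp (And.imp_right (hR _ _)) (And.imp_right (hR _ _))

/-! ### Hyperbolic polygons -/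

theorem mem_HConvexHull_of_mem_GSeg {S : Set UpperHalfPlane} {A B C D z : UpperHalfPlane}
    (hB : B ∈ S) (hC : C ∈ S) (hD : D ∈ S) (hz : z ∈ GSeg C D) (hA : A ∈ GSeg z B) :
    A ∈ HConvexHull S := fun _ hT =>
  hT.1 z (hT.1 C (hT.2 hC) D (hT.2 hD) hz) B (hT.2 hB) hA

section Polygon

variable {n : ℕ} {V : ZMod n → UpperHalfPlane}

theorem dotProduct_sideNormal_mul_pos (hn : 2 ≤ n)
    (hsimple : ∀ i j : ZMod n, j ≠ i → j ≠ i + 1 → j + 1 ≠ i →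
      Disjoint (GSeg (V i) (V (i + 1))) (GSeg (V j) (V (j + 1))))
    (hcol : ∀ i j : ZMod n, j ≠ i → j ≠ i + 1 → ¬HCollinear (V j) (V i) (V (i + 1)))
    (hconvex : ∀ i : ZMod n, V i ∉ HConvexHull (V '' {j | j ≠ i}))
    {i j : ZMod n} (hji : j ≠ i) (hji' : j ≠ i + 1) (hij : j + 1 ≠ i) :
    0 < (toHyperboloid (V j) ⬝ᵥ sideNormal (toHyperboloid ∘ V) i) *
      (toHyperboloid (V (j + 1)) ⬝ᵥ sideNormal (toHyperboloid ∘ V) i) := by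
  have hij' : j + 1 ≠ i + 1 := by simpa using hji
  have hne : i + 1 ≠ i := add_one_ne_self (by omega) i
  by_contra! hle
  have hlt := hle.lt_of_ne (mul_ne_zero
    (fun h => hcol i j hji hji' (hCollinear_of_triple_product_eq_zero h))
    (fun h => hcol i (j + 1) hij hij' (hCollinear_of_triple_product_eq_zero h)))
  obtain ⟨z, hz, hzAB | hA | hB⟩ := exists_mem_GSeg_hCollinear hlt
  · exact Set.disjoint_left.1 (hsimple i j hji hji' hij) hzAB hz
  · exact hconvex i (mem_HConvexHull_of_mem_GSeg ⟨i + 1, hne, rfl⟩ ⟨j, hji, rfl⟩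
      ⟨j + 1, hij, rfl⟩ hz hA)
  · exact hconvex (i + 1) (mem_HConvexHull_of_mem_GSeg ⟨i, hne.symm, rfl⟩ ⟨j, hji', rfl⟩
      ⟨j + 1, hij', rfl⟩ hz hB)

theorem exists_strictConvexCycle_toHyperboloid [NeZero n] (hn : 3 ≤ n)
    (hsimple : ∀ i j : ZMod n, j ≠ i → j ≠ i + 1 → j + 1 ≠ i →
      Disjoint (GSeg (V i) (V (i + 1))) (GSeg (V j) (V (j + 1))))
    (hcol : ∀ i j : ZMod n, j ≠ i → j ≠ i + 1 → ¬HCollinear (V j) (V i) (V (i + 1)))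
    (hconvex : ∀ i : ZMod n, V i ∉ HConvexHull (V '' {j | j ≠ i})) :
    ∃ ε : ℝ, ε * ε = 1 ∧ StrictConvexCycle fun i => ε • toHyperboloid (V i) :=
  exists_strictConvexCycle_smul hn
    (fun i j hji hji' h => hcol i j hji hji' (hCollinear_of_triple_product_eq_zero h))
    fun _ _ => dotProduct_sideNormal_mul_pos (by omega) hsimple hcol hconvex

end Polygon

/-- The pole, with respect to the Lorentz form, of the plane whose intersection with the
hyperboloid is the circle with centre `O` and radius `R`. -/
noncomputable def circlePole (O : UpperHalfPlane) (R : ℝ) : Fin 3 → ℝ :=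
  (cosh R)⁻¹ • toHyperboloid O

theorem lorentz_circlePole (O A : UpperHalfPlane) :
    lorentz (circlePole O (dist O A)) (toHyperboloid A) = 1 := by
  rw [circlePole, map_smul, LinearMap.smul_apply, lorentz_toHyperboloid, smul_eq_mul,
    inv_mul_cancel₀ (cosh_pos _).ne']

theorem lorentz_circlePole_self (O : UpperHalfPlane) (R : ℝ) :
    lorentz (circlePole O R) (circlePole O R) = (cosh R ^ 2)⁻¹ := by
  simp [circlePole, lorentz_toHyperboloid_self, sq]

theorem lorentz_smul_smul {ε : ℝ} (hε : ε * ε = 1) (u v : Fin 3 → ℝ) :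
    lorentz (ε • u) (ε • v) = lorentz u v := by
  rw [map_smul, map_smul, LinearMap.smul_apply, smul_smul, hε, one_smul]

theorem eq_of_circlePole_eq {O O' : UpperHalfPlane} {R R' : ℝ}
    (h : circlePole O R = circlePole O' R') : O = O' := by
  have hself : (cosh R ^ 2)⁻¹ = (cosh R' ^ 2)⁻¹ := by
    rw [← lorentz_circlePole_self O, ← lorentz_circlePole_self O', h]
  have hcosh : cosh R = cosh R' := by
    simpa [(cosh_pos _).le] using hself
  rw [circlePole, circlePole, hcosh] at h
  exact toHyperboloid_injective (smul_right_injective _ (inv_ne_zero (cosh_pos R').ne') h)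

theorem lt_of_lorentz_circlePole_self_lt {O O' : UpperHalfPlane} {R R' : ℝ} (hR : 0 ≤ R)
    (h : lorentz (circlePole O R) (circlePole O R) <
      lorentz (circlePole O' R') (circlePole O' R')) : R' < R := by
  contrapose! h
  rw [lorentz_circlePole_self, lorentz_circlePole_self]
  have := cosh_pos R
  gcongr
  exact cosh_strictMonoOn.monotoneOn hR (hR.trans h) h

theorem exists_circlePole_eq_of_mem_HCone {O V A B : UpperHalfPlane} (R : ℝ) (hV : V ∉ GSeg A B)
    (hO : O ∈ HCone V A B) :
    ∃ α β σ : ℝ, 0 ≤ α ∧ 0 ≤ β ∧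
      circlePole O R = α • toHyperboloid A + β • toHyperboloid B + σ • toHyperboloid V := by
  obtain ⟨α, β, σ, hα, hβ, h⟩ := exists_toHyperboloid_eq_of_mem_HCone hV hO
  have := cosh_pos R
  refine ⟨(cosh R)⁻¹ * α, (cosh R)⁻¹ * β, (cosh R)⁻¹ * σ, by positivity, by positivity, ?_⟩
  rw [circlePole, h]
  module

theorem circumcenter_ne_succ {n : ℕ} (hn : 4 ≤ n) {V O : ZMod n → UpperHalfPlane} {R : ZMod n → ℝ}
    (hcirc : ∀ i : ZMod n, dist (O i) (V (i - 1)) = R i ∧ dist (O i) (V i) = R i ∧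
      dist (O i) (V (i + 1)) = R i)
    (hgen4 : ¬∃ (c : UpperHalfPlane) (r : ℝ) (i j k l : ZMod n),
      i ≠ j ∧ i ≠ k ∧ i ≠ l ∧ j ≠ k ∧ j ≠ l ∧ k ≠ l ∧
      dist c (V i) = r ∧ dist c (V j) = r ∧ dist c (V k) = r ∧ dist c (V l) = r) (i : ZMod n) :
    O i ≠ O (i + 1) := by
  obtain ⟨j, rfl⟩ : ∃ j, i = j + 1 := ⟨i - 1, (sub_add_cancel i 1).symm⟩
  intro h
  obtain ⟨h₀, h₁, h₂⟩ := hcirc (j + 1)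
  obtain ⟨h₁', -, h₃⟩ := hcirc (j + 1 + 1)
  rw [add_sub_cancel_right] at h₀ h₁'
  rw [← h, ← h₁', ← h, h₁] at h₃
  have hne {s t : ℕ} (hs : s < 4) (ht : t < 4) (hst : s ≠ t) : j + (s : ZMod n) ≠ j + t :=
    add_natCast_ne j (by omega) (by omega) hst
  exact hgen4 ⟨O (j + 1), R (j + 1), j + (0 : ℕ), j + (1 : ℕ), j + (2 : ℕ), j + (3 : ℕ),
    hne (by omega) (by omega) (by omega), hne (by omega) (by omega) (by omega),
    hne (by omega) (by omega) (by omega), hne (by omega) (by omega) (by omega),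
    hne (by omega) (by omega) (by omega), hne (by omega) (by omega) (by omega),
    by simpa using h₀, by simpa using h₁, by simpa [add_assoc, one_add_one_eq_two] using h₂,
    by simpa [add_assoc, one_add_one_eq_two, two_add_one_eq_three] using h₃⟩

end DiscreteFourVertex

open DiscreteFourVertex in
theorem stmt12_general {n : ℕ} [NeZero n] (hn : 3 ≤ n)
    (V O : ZMod n → UpperHalfPlane) (R : ZMod n → ℝ)
    (hsimple : ∀ i j : ZMod n, j ≠ i → j ≠ i + 1 → j + 1 ≠ i →
      Disjoint (GSeg (V i) (V (i + 1))) (GSeg (V j) (V (j + 1))))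
    (hcirc : ∀ i : ZMod n, dist (O i) (V (i - 1)) = R i ∧ dist (O i) (V i) = R i ∧
      dist (O i) (V (i + 1)) = R i)
    (hO : ∀ i, O i ≠ O (i + 1))
    (hcol : ∀ i j : ZMod n, j ≠ i → j ≠ i + 1 → ¬HCollinear (V j) (V i) (V (i + 1)))
    (hconvex : ∀ i : ZMod n, V i ∉ HConvexHull (V '' {j | j ≠ i}))
    (hcoh : ∀ i : ZMod n, O i ∈ HCone (V i) (V (i - 1)) (V (i + 1))) :
    2 ≤ Set.ncard {i : ZMod n | R (i - 1) < R i ∧ R (i + 1) < R i} ∧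
    2 ≤ Set.ncard {i : ZMod n | R i < R (i - 1) ∧ R i < R (i + 1)} := by
  obtain ⟨ε, hε, hw⟩ := exists_strictConvexCycle_toHyperboloid hn hsimple hcol hconvex
  have hε₀ : ε ≠ 0 := left_ne_zero_of_mul (hε.trans_ne one_ne_zero)
  have hpole {i : ZMod n} {A : UpperHalfPlane} (hA : dist (O i) A = R i) :
      lorentz (ε • circlePole (O i) (R i)) (ε • toHyperboloid A) = 1 := by
    rw [lorentz_smul_smul hε, ← hA, lorentz_circlePole]
  refine two_le_ncard_localExtrema_of_poles (P := fun i => ε • circlePole (O i) (R i)) hn hw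
    (fun i => ?_) (fun i => hpole (hcirc i).1) (fun i => hpole (hcirc i).2.1)
    (fun i => hpole (hcirc i).2.2)
    (fun i h => hO i (eq_of_circlePole_eq (smul_right_injective _ hε₀ h))) (fun i => ?_)
    (fun i j h => ?_)
  · simp only [lorentz_smul_smul hε, lorentz_toHyperboloid_self, one_pos]
  · have hsub : i - 1 ≠ i := fun h =>
      add_one_ne_self (by omega) (i - 1) (by rw [sub_add_cancel, h])
    have hsub' : i - 1 ≠ i + 1 := by
      simpa [sub_eq_iff_eq_add, add_assoc, one_add_one_eq_two] using (add_two_ne_self hn i).symm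
    obtain ⟨α, β, σ, hα, hβ, h⟩ := exists_circlePole_eq_of_mem_HCone (R i)
      (fun hV => hcol i (i - 1) hsub hsub' (Or.inr (Or.inl hV))) (hcoh i)
    exact ⟨α, β, σ, hα, hβ, by rw [h]; module⟩
  · rw [lorentz_smul_smul hε, lorentz_smul_smul hε] at h
    exact lt_of_lorentz_circlePole_self_lt ((hcirc i).1 ▸ dist_nonneg) h

/-- Discrete four vertex theorem for convex hyperbolic polygons: a convex generic
coherent hyperbolic polygon with at least four vertices has at least four locally
extremal vertices, i.e. the cyclic sequence of circumradii `R i` of consecutive vertex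
triples has at least two strict local maxima and at least two strict local minima. -/
theorem stmt12 {n : ℕ} [NeZero n] (hn : 4 ≤ n)
    (V O : ZMod n → UpperHalfPlane) (R : ZMod n → ℝ)
    -- P is a simple closed polygon:
    (hinj : Function.Injective V)
    (hsimple : ∀ i j : ZMod n, j ≠ i → j ≠ i + 1 → j + 1 ≠ i →
      Disjoint (GSeg (V i) (V (i + 1))) (GSeg (V j) (V (j + 1))))
    (hadj : ∀ i : ZMod n,
      GSeg (V i) (V (i + 1)) ∩ GSeg (V (i + 1)) (V (i + 2)) = {V (i + 1)})
    -- generic: every three consecutive vertices lie on a hyperbolic circle with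
    -- center O i and radius R i, no four vertices are concyclic, and no three lie
    -- on a common geodesic:
    (hcirc : ∀ i : ZMod n, dist (O i) (V (i - 1)) = R i ∧ dist (O i) (V i) = R i ∧
      dist (O i) (V (i + 1)) = R i)
    (hRpos : ∀ i, 0 < R i)
    (hgen4 : ¬∃ (c : UpperHalfPlane) (r : ℝ) (i j k l : ZMod n),
      i ≠ j ∧ i ≠ k ∧ i ≠ l ∧ j ≠ k ∧ j ≠ l ∧ k ≠ l ∧
      dist c (V i) = r ∧ dist c (V j) = r ∧ dist c (V k) = r ∧ dist c (V l) = r)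
    (hgen3 : ∀ i j k : ZMod n, i ≠ j → i ≠ k → j ≠ k →
      ¬HCollinear (V i) (V j) (V k))
    -- convex: the vertices are in convex position:
    (hconvex : ∀ i : ZMod n, V i ∉ HConvexHull (V '' {j | j ≠ i}))
    -- coherent: each circumcenter lies in the infinite cone at the middle vertex:
    (hcoh : ∀ i : ZMod n, O i ∈ HCone (V i) (V (i - 1)) (V (i + 1))) :
    2 ≤ Set.ncard {i : ZMod n | R (i - 1) < R i ∧ R (i + 1) < R i} ∧
    2 ≤ Set.ncard {i : ZMod n | R i < R (i - 1) ∧ R i < R (i + 1)} :=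
  stmt12_general (by omega) V O R hsimple hcirc
    (DiscreteFourVertex.circumcenter_ne_succ hn hcirc hgen4)
    (fun i j hji hji' => hgen3 j i (i + 1) hji hji'
      (DiscreteFourVertex.add_one_ne_self (by omega) i).symm) hconvex hcoh
end

section
/- Let P be a convex generic coherent hyperbolic polygon. For consecutive vertices Vᵢ₋₁, Vᵢ with circumcircles Cᵢ₋₁ (through Vᵢ₋₂,Vᵢ₋₁,Vᵢ) and Cᵢ (through Vᵢ₋₁,Vᵢ,Vᵢ₊₁) of radii Rᵢ₋₁ and Rᵢ: Vᵢ₊₁ lies strictly inside Cᵢ₋₁ if and only if Rᵢ₋₁ > Rᵢ, and Vᵢ₊₁ lies strictly outside Cᵢ₋₁ if and only if Rᵢ₋₁ < Rᵢ. -/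
open Real

/-! In the hyperboloid model let `B`, `C` be two consecutive vertices, `D` the vertex after `C`,
`O'` the centre of the circle through `B`, `C` and the vertex before `B`, and `O` the centre of the
circle through `B`, `C`, `D`; write `k'` and `k` for the hyperbolic cosines of their radii.
The vector `k' • O - k • O'` is Lorentz orthogonal to `B` and `C`, and its product with `D` is
`k * (k' - cosh (dist O' D))`. Hence `D` is inside the first circle iff the `k`-weighted signed
height of `O'` over the line `BC` exceeds the `k'`-weighted one of `O`, heights being positive on
the side of `D`. The squares of these weighted heights differ by a positive multiple of
`k' ^ 2 - k ^ 2`, so everything is decided by their signs. Convexity puts all other vertices on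
the same side of `BC`, and coherence then puts both centres on that side. -/

section OrderedRing

lemma cmp_eq_cmp_of_sub_eq_sub {α : Type*} [AddCommGroup α] [LinearOrder α] [IsOrderedAddMonoid α]
    {a b c d : α} (h : a - b = c - d) : cmp a b = cmp c d := by
  rw [← cmp_sub_zero a b, h, cmp_sub_zero]

variable {α : Type*} [CommRing α] [LinearOrder α] [IsStrictOrderedRing α] {a b c : α}

lemma mul_pos_of_mul_pos_of_mul_pos (hab : 0 < a * b) (hbc : 0 < b * c) : 0 < a * c := by
  have h : 0 < b ^ 2 * (a * c) := by linarith [mul_pos hab hbc]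
  exact pos_of_mul_pos_right h (sq_nonneg b)

lemma mul_nonneg_of_mul_pos_of_mul_nonneg (hab : 0 < a * b) (hbc : 0 ≤ b * c) : 0 ≤ a * c := by
  have hb : b ≠ 0 := right_ne_zero_of_mul hab.ne'
  have h : 0 ≤ b ^ 2 * (a * c) := by linarith [mul_nonneg hab.le hbc]
  exact nonneg_of_mul_nonneg_right h (by positivity)

end OrderedRing

section Hyperboloid

open UpperHalfPlane Matrix

/-- The Lorentz form of signature `(1, 2)` on `ℝ³`, whose positive unit vectors form the
hyperboloid model of the hyperbolic plane. -/
noncomputable def lorentzForm : LinearMap.BilinForm ℝ (Fin 3 → ℝ) :=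
  Matrix.toBilin' (Matrix.diagonal ![1, -1, -1])

lemma lorentzForm_apply (x y : Fin 3 → ℝ) :
    lorentzForm x y = x 0 * y 0 - x 1 * y 1 - x 2 * y 2 := by
  simp only [lorentzForm, Matrix.toBilin'_apply', Matrix.mulVec_diagonal, dotProduct,
    Fin.sum_univ_three, Matrix.cons_val]
  ring

/-- The point of the hyperboloid model corresponding to a point of the upper half-plane. -/
noncomputable def hyperboloidPoint (z : ℍ) : Fin 3 → ℝ :=
  ![(z.re ^ 2 + z.im ^ 2 + 1) / (2 * z.im), (z.re ^ 2 + z.im ^ 2 - 1) / (2 * z.im), z.re / z.im]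

lemma hyperboloidPoint_zero_pos (z : ℍ) : 0 < hyperboloidPoint z 0 := by
  have := z.im_pos
  simp only [hyperboloidPoint, Matrix.cons_val_zero]
  positivity

lemma lorentzForm_hyperboloidPoint (z w : ℍ) :
    lorentzForm (hyperboloidPoint z) (hyperboloidPoint w) = cosh (dist z w) := by
  have hz := z.im_ne_zero
  have hw := w.im_ne_zero
  rw [cosh_dist', lorentzForm_apply]
  simp only [hyperboloidPoint, Matrix.cons_val]
  field_simp
  ring

lemma lorentzForm_hyperboloidPoint_self (z : ℍ) :
    lorentzForm (hyperboloidPoint z) (hyperboloidPoint z) = 1 := by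
  rw [lorentzForm_hyperboloidPoint, dist_self, cosh_zero]

lemma exists_hyperboloidPoint_eq {x : Fin 3 → ℝ} (hx₀ : 0 < x 0) (hx : lorentzForm x x = 1) :
    ∃ z : ℍ, hyperboloidPoint z = x := by
  rw [lorentzForm_apply] at hx
  have hpos : 0 < x 0 - x 1 := by nlinarith [sq_nonneg (x 2), sq_nonneg (x 0 + x 1)]
  have hne := hpos.ne'
  refine ⟨⟨⟨x 2 / (x 0 - x 1), 1 / (x 0 - x 1)⟩, by simpa using hpos⟩, ?_⟩
  ext i
  fin_cases i <;> simp [hyperboloidPoint] <;> field_simp <;> linarith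

lemma exists_hyperboloidPoint_eq_smul {x : Fin 3 → ℝ} (hx₀ : 0 < x 0)
    (hx : 0 < lorentzForm x x) : ∃ z : ℍ, ∃ t > (0 : ℝ), hyperboloidPoint z = t • x := by
  have hs : 0 < (√(lorentzForm x x))⁻¹ := by positivity
  obtain ⟨z, hz⟩ := exists_hyperboloidPoint_eq (x := (√(lorentzForm x x))⁻¹ • x)
    (mul_pos hs hx₀) (by
      simp only [map_smul, LinearMap.smul_apply, smul_eq_mul]
      rw [← mul_assoc, ← mul_inv, Real.mul_self_sqrt hx.le, inv_mul_cancel₀ hx.ne'])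
  exact ⟨z, _, hs, hz⟩

lemma eq_hyperboloidPoint_of_lorentzForm_eq_one {x : Fin 3 → ℝ} {z : ℍ}
    (hx : lorentzForm x x = 1) (hxz : lorentzForm x (hyperboloidPoint z) = 1) :
    x = hyperboloidPoint z := by
  have hz := lorentzForm_hyperboloidPoint_self z
  set y := hyperboloidPoint z
  set v := x - y with hv
  have hvv : lorentzForm v v = 0 := by
    have hyx : lorentzForm y x = 1 := by rw [← hxz, lorentzForm_apply, lorentzForm_apply]; ring
    simp only [hv, map_sub, LinearMap.sub_apply, hx, hxz, hyx, hz, sub_self]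
  have hvy : lorentzForm v y = 0 := by
    rw [hv, map_sub, LinearMap.sub_apply, hxz, hz, sub_self]
  rw [lorentzForm_apply] at hz hvv hvy
  -- Lagrange's identity for the spatial parts of `v` and `y`.
  have hv₀ : v 0 ^ 2 + (v 1 * y 2 - v 2 * y 1) ^ 2 = 0 := by
    linear_combination (-v 0 ^ 2) * hz - (y 1 ^ 2 + y 2 ^ 2) * hvv +
      (v 0 * y 0 + v 1 * y 1 + v 2 * y 2) * hvy
  have h₀ : v 0 = 0 := by nlinarith [sq_nonneg (v 1 * y 2 - v 2 * y 1)]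
  have h₁ : v 1 = 0 := by nlinarith [sq_nonneg (v 2)]
  have h₂ : v 2 = 0 := by nlinarith
  have hv_zero : v = 0 := by
    ext i
    fin_cases i <;> assumption
  exact sub_eq_zero.mp hv_zero

lemma lorentzForm_smul_add_smul_self (A B : ℍ) (a b : ℝ) :
    lorentzForm (a • hyperboloidPoint A + b • hyperboloidPoint B)
      (a • hyperboloidPoint A + b • hyperboloidPoint B) =
      a ^ 2 + b ^ 2 + 2 * a * b * cosh (dist A B) := by
  simp only [map_add, map_smul, LinearMap.add_apply, LinearMap.smul_apply, smul_eq_mul,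
    lorentzForm_hyperboloidPoint, dist_self, cosh_zero, dist_comm B A]
  ring

lemma exists_hyperboloidPoint_eq_smul_add (A B : ℍ) {a b : ℝ} (ha : 0 ≤ a) (hb : 0 ≤ b)
    (hab : 0 < a + b) :
    ∃ z : ℍ, ∃ t > (0 : ℝ),
      hyperboloidPoint z = t • (a • hyperboloidPoint A + b • hyperboloidPoint B) := by
  apply exists_hyperboloidPoint_eq_smul
  · have hA := hyperboloidPoint_zero_pos A
    have hB := hyperboloidPoint_zero_pos B
    simp only [Pi.add_apply, Pi.smul_apply, smul_eq_mul]
    rcases ha.eq_or_lt with rfl | ha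
    · rw [zero_add] at hab
      positivity
    · positivity
  · rw [lorentzForm_smul_add_smul_self]
    have hcosh := mul_nonneg (mul_nonneg ha hb) (sub_nonneg.mpr (one_le_cosh (dist A B)))
    linarith [pow_pos hab 2]

end Hyperboloid

section Segment

open UpperHalfPlane Matrix

variable {A B C z w : ℍ}

lemma gSeg_comm (A B : ℍ) : GSeg A B = GSeg B A := by
  ext z
  simp only [GSeg, Set.mem_ofPred_eq, dist_comm _ z, dist_comm A B, add_comm (dist z A)]

lemma left_mem_gSeg (A B : ℍ) : A ∈ GSeg A B := by simp [GSeg]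

lemma gSeg_self (A : ℍ) : GSeg A A = {A} := by
  ext z
  simp [GSeg, dist_comm A z, ← two_mul]

lemma hCone_comm (V A B : ℍ) : HCone V A B = HCone V B A := by
  simp only [HCone, gSeg_comm A B]

lemma exists_smul_add_smul_of_mem_gSeg (hz : z ∈ GSeg A B) :
    ∃ a b : ℝ, 0 ≤ a ∧ 0 ≤ b ∧
      hyperboloidPoint z = a • hyperboloidPoint A + b • hyperboloidPoint B := by
  rcases eq_or_ne A B with rfl | hAB
  · rw [gSeg_self, Set.mem_singleton_iff] at hz
    exact ⟨1, 0, by simp [hz]⟩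
  have hz : dist A z + dist z B = dist A B := hz
  have hd : 0 < sinh (dist A B) := sinh_pos_iff.mpr (dist_pos.mpr hAB)
  have hsinh := hd.ne'
  refine ⟨sinh (dist z B) / sinh (dist A B), sinh (dist A z) / sinh (dist A B), ?_, ?_,
    (eq_hyperboloidPoint_of_lorentzForm_eq_one ?_ ?_).symm⟩
  · exact div_nonneg (sinh_nonneg_iff.mpr dist_nonneg) hd.le
  · exact div_nonneg (sinh_nonneg_iff.mpr dist_nonneg) hd.le
  · rw [lorentzForm_smul_add_smul_self]
    field_simp
    rw [← hz, sinh_add, cosh_add]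
    linear_combination (-sinh (dist z B) ^ 2) * cosh_sq (dist A z)
      - sinh (dist A z) ^ 2 * cosh_sq (dist z B)
  · simp only [map_add, map_smul, LinearMap.add_apply, LinearMap.smul_apply, smul_eq_mul,
      lorentzForm_hyperboloidPoint, dist_comm B z]
    field_simp
    rw [← hz, sinh_add]
    ring

lemma mem_gSeg_of_eq_smul_add_smul {a b : ℝ} (ha : 0 ≤ a) (hb : 0 ≤ b)
    (h : hyperboloidPoint z = a • hyperboloidPoint A + b • hyperboloidPoint B) :
    z ∈ GSeg A B := by
  have hcosh (w : ℍ) : cosh (dist z w) = a * cosh (dist A w) + b * cosh (dist B w) := by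
    simp only [← lorentzForm_hyperboloidPoint, h, map_add, map_smul, LinearMap.add_apply,
      LinearMap.smul_apply, smul_eq_mul]
  have hA : cosh (dist A z) = a + b * cosh (dist A B) := by
    rw [dist_comm A z, hcosh, dist_self, cosh_zero, mul_one, dist_comm B A]
  have hB : cosh (dist z B) = a * cosh (dist A B) + b := by
    rw [hcosh, dist_self, cosh_zero, mul_one]
  have hone : a ^ 2 + b ^ 2 + 2 * a * b * cosh (dist A B) = 1 := by
    rw [← lorentzForm_smul_add_smul_self, ← h, lorentzForm_hyperboloidPoint_self]
  have hsinh {x y : ℍ} : 0 ≤ sinh (dist x y) := sinh_nonneg_iff.mpr dist_nonneg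
  have hsA : sinh (dist A z) = b * sinh (dist A B) := by
    rw [← sq_eq_sq₀ hsinh (mul_nonneg hb hsinh), mul_pow, sinh_sq, sinh_sq, hA]
    linear_combination hone
  have hsB : sinh (dist z B) = a * sinh (dist A B) := by
    rw [← sq_eq_sq₀ hsinh (mul_nonneg ha hsinh), mul_pow, sinh_sq, sinh_sq, hB]
    linear_combination hone
  apply cosh_injOn (add_nonneg dist_nonneg dist_nonneg) (Set.mem_Ici.mpr dist_nonneg)
  rw [cosh_add, hA, hB, hsA, hsB]
  linear_combination (-a * b) * cosh_sq (dist A B) + cosh (dist A B) * hone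

lemma dotProduct_mul_nonneg_of_mem_hCone {n : Fin 3 → ℝ} (hBC : B ≠ C)
    (hB : hyperboloidPoint B ⬝ᵥ n = 0) (hC : hyperboloidPoint C ⬝ᵥ n = 0)
    (hz : z ∈ HCone B A C) :
    0 ≤ (hyperboloidPoint A ⬝ᵥ n) * (hyperboloidPoint z ⬝ᵥ n) := by
  obtain ⟨w, hw, hzw⟩ := hz
  obtain ⟨a, c, ha, hc, hw⟩ := exists_smul_add_smul_of_mem_gSeg hw
  have hwn : hyperboloidPoint w ⬝ᵥ n = a * (hyperboloidPoint A ⬝ᵥ n) := by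
    rw [hw, add_dotProduct, smul_dotProduct, smul_dotProduct, hC, smul_zero, add_zero, smul_eq_mul]
  rcases eq_or_ne (hyperboloidPoint A ⬝ᵥ n) 0 with hA | hA
  · rw [hA, zero_mul]
  have hwB : w ≠ B := by
    rintro rfl
    rw [hB, zero_eq_mul, or_iff_left hA] at hwn
    rw [hwn, zero_smul, ← zero_smul ℝ (hyperboloidPoint C)] at hw
    have hwCC : w ∈ GSeg C C := mem_gSeg_of_eq_smul_add_smul le_rfl hc hw
    exact hBC (by rwa [gSeg_self] at hwCC)
  suffices ∃ t ≥ 0, hyperboloidPoint z ⬝ᵥ n = t * (hyperboloidPoint A ⬝ᵥ n) by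
    obtain ⟨t, ht, h⟩ := this
    rw [h, mul_left_comm]
    exact mul_nonneg ht (mul_self_nonneg _)
  rcases hzw with hzw | hzw
  · obtain ⟨b, t, hb, ht, hwz⟩ := exists_smul_add_smul_of_mem_gSeg hzw
    have ht₀ : t ≠ 0 := by
      rintro rfl
      rw [zero_smul, ← zero_smul ℝ (hyperboloidPoint B)] at hwz
      have hwBB : w ∈ GSeg B B := mem_gSeg_of_eq_smul_add_smul hb le_rfl hwz
      exact hwB (by rwa [gSeg_self] at hwBB)
    refine ⟨a / t, div_nonneg ha ht, ?_⟩
    rw [hwz, add_dotProduct, smul_dotProduct, smul_dotProduct, hB, smul_zero, zero_add,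
      smul_eq_mul] at hwn
    field_simp
    linarith
  · obtain ⟨b, t, -, ht, hz⟩ := exists_smul_add_smul_of_mem_gSeg hzw
    refine ⟨t * a, mul_nonneg ht ha, ?_⟩
    rw [hz, add_dotProduct, smul_dotProduct, smul_dotProduct, hB, smul_zero, zero_add, hwn,
      smul_eq_mul, mul_assoc]

end Segment

section Side

open UpperHalfPlane Matrix

variable {A B C D O O' U W X z : ℍ}

/-- The signed height of `z` over the line `BC`, up to a factor depending on `B` and `C`: the
triple product of the hyperboloid points of `z`, `B` and `C`. It vanishes on the line `BC` and its
sign distinguishes the two sides of that line. -/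
noncomputable def hSide (B C z : ℍ) : ℝ :=
  hyperboloidPoint z ⬝ᵥ hyperboloidPoint B ⨯₃ hyperboloidPoint C

lemma ne_of_hSide_ne_zero (h : hSide B C z ≠ 0) : B ≠ C := by
  rintro rfl
  exact h (by rw [hSide, cross_self, dotProduct_zero])

lemma dotProduct_cross_mul_dotProduct_cross_eq_det_lorentzForm (u v x y : Fin 3 → ℝ) :
    (x ⬝ᵥ u ⨯₃ v) * (y ⬝ᵥ u ⨯₃ v) =
      !![lorentzForm u u, lorentzForm u v, lorentzForm u y;
        lorentzForm v u, lorentzForm v v, lorentzForm v y;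
        lorentzForm x u, lorentzForm x v, lorentzForm x y].det := by
  rw [Matrix.det_fin_three]
  simp only [lorentzForm_apply, cross_apply, vec3_dotProduct, Matrix.of_apply, Matrix.cons_val]
  ring

lemma hSide_mul_hSide (B C X Y : ℍ) :
    hSide B C X * hSide B C Y =
      cosh (dist X Y) * (1 - cosh (dist B C) ^ 2) - cosh (dist X B) * cosh (dist Y B)
        - cosh (dist X C) * cosh (dist Y C)
        + cosh (dist B C) *
          (cosh (dist X B) * cosh (dist Y C) + cosh (dist X C) * cosh (dist Y B)) := by
  rw [hSide, hSide, dotProduct_cross_mul_dotProduct_cross_eq_det_lorentzForm,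
    Matrix.det_fin_three]
  simp only [lorentzForm_hyperboloidPoint, dist_self, cosh_zero, dist_comm C B, dist_comm B Y,
    dist_comm C Y, Matrix.of_apply, Matrix.cons_val]
  ring

lemma hSide_mul_hSide_of_dist_eq (hO : dist O B = dist O C) (X : ℍ) :
    hSide B C O * hSide B C X =
      (cosh (dist B C) - 1) * (cosh (dist O C) * (cosh (dist X B) + cosh (dist X C))
        - (cosh (dist B C) + 1) * cosh (dist O X)) := by
  rw [hSide_mul_hSide, hO]
  ring

lemma hCollinear_of_hSide_eq_zero (h : hSide B C X = 0) : HCollinear B X C := by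
  have hgram := hSide_mul_hSide B C X X
  rw [h, dist_self, cosh_zero, dist_comm X B] at hgram
  have hfactor : (cosh (dist B X + dist X C) - cosh (dist B C)) *
      (cosh (dist B X - dist X C) - cosh (dist B C)) = 0 := by
    rw [cosh_add, cosh_sub]
    linear_combination hgram - sinh (dist B X) ^ 2 * sinh_sq (dist X C)
      - (cosh (dist X C) ^ 2 - 1) * sinh_sq (dist B X)
  rcases mul_eq_zero.mp hfactor with hsum | hdiff
  · refine Or.inr (Or.inl ?_)
    exact cosh_injOn (add_nonneg dist_nonneg dist_nonneg) (Set.mem_Ici.mpr dist_nonneg)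
      (sub_eq_zero.mp hsum)
  · have habs : |dist B X - dist X C| = dist B C :=
      cosh_injOn (Set.mem_Ici.mpr (abs_nonneg _)) (Set.mem_Ici.mpr dist_nonneg)
        ((cosh_abs _).trans (sub_eq_zero.mp hdiff))
    rcases (abs_eq dist_nonneg).mp habs with hpos | hneg
    · refine Or.inr (Or.inr ?_)
      change dist B C + dist C X = dist B X
      linarith [dist_comm C X]
    · refine Or.inl ?_
      change dist X B + dist B C = dist X C
      linarith [dist_comm X B]

lemma exists_mem_gSeg_hSide_eq_zero (h : hSide B C U * hSide B C W ≤ 0) :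
    ∃ X ∈ GSeg U W, hSide B C X = 0 := by
  rcases eq_or_ne (hSide B C U) 0 with hU | hU
  · exact ⟨U, left_mem_gSeg U W, hU⟩
  obtain ⟨X, t, ht, hX⟩ := exists_hyperboloidPoint_eq_smul_add U W
    (abs_nonneg (hSide B C W)) (abs_nonneg (hSide B C U)) (by positivity)
  refine ⟨X, ?_, ?_⟩
  · rw [smul_add, smul_smul, smul_smul] at hX
    exact mem_gSeg_of_eq_smul_add_smul (by positivity) (by positivity) hX
  · have hweights : |hSide B C W| * hSide B C U + |hSide B C U| * hSide B C W = 0 := by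
      rcases mul_nonpos_iff.mp h with ⟨hU, hW⟩ | ⟨hU, hW⟩
      · rw [abs_of_nonneg hU, abs_of_nonpos hW]
        ring
      · rw [abs_of_nonpos hU, abs_of_nonneg hW]
        ring
    rw [hSide, hX, smul_dotProduct, add_dotProduct, smul_dotProduct, smul_dotProduct]
    exact mul_eq_zero_of_right t hweights

lemma cosh_mul_hSide_sub_cosh_mul_hSide (hOB : dist O B = dist O C) (hOD : dist O D = dist O C)
    (hO'B : dist O' B = dist O' C) :
    cosh (dist O' C) * (hSide B C D * hSide B C O) -
        cosh (dist O C) * (hSide B C D * hSide B C O') =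
      (cosh (dist B C) ^ 2 - 1) * cosh (dist O C) * cosh (dist O' D) -
        (cosh (dist B C) ^ 2 - 1) * cosh (dist O C) * cosh (dist O' C) := by
  have hO := hSide_mul_hSide_of_dist_eq hOB D
  have hO' := hSide_mul_hSide_of_dist_eq hO'B D
  rw [hOD] at hO
  linear_combination cosh (dist O' C) * hO - cosh (dist O C) * hO'

lemma cosh_mul_hSide_sq_sub_cosh_mul_hSide_sq (hOB : dist O B = dist O C)
    (hO'B : dist O' B = dist O' C) :
    (cosh (dist O' C) * hSide B C O) ^ 2 - (cosh (dist O C) * hSide B C O') ^ 2 =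
      (cosh (dist B C) ^ 2 - 1) * (cosh (dist O C) ^ 2 - cosh (dist O' C) ^ 2) := by
  have hO := hSide_mul_hSide_of_dist_eq hOB O
  have hO' := hSide_mul_hSide_of_dist_eq hO'B O'
  rw [hOB, dist_self, cosh_zero] at hO
  rw [hO'B, dist_self, cosh_zero] at hO'
  linear_combination cosh (dist O' C) ^ 2 * hO - cosh (dist O C) ^ 2 * hO'

theorem cmp_dist_of_dist_eq (hOB : dist O B = dist O C) (hOD : dist O D = dist O C)
    (hO'B : dist O' B = dist O' C) (hD : hSide B C D ≠ 0)
    (hO : 0 ≤ hSide B C D * hSide B C O) (hO' : 0 ≤ hSide B C D * hSide B C O') :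
    cmp (dist O' D) (dist O' C) = cmp (dist O C) (dist O' C) := by
  have hBC : 1 < cosh (dist B C) := one_lt_cosh.mpr (dist_ne_zero.mpr (ne_of_hSide_ne_zero hD))
  have hk : 0 < cosh (dist O C) := cosh_pos _
  have hk' : 0 < cosh (dist O' C) := cosh_pos _
  have hsub := cosh_mul_hSide_sub_cosh_mul_hSide hOB hOD hO'B
  have hsq_sub := cosh_mul_hSide_sq_sub_cosh_mul_hSide_sq hOB hO'B
  set k := cosh (dist O C)
  set k' := cosh (dist O' C)
  set d := hSide B C D
  set m := cosh (dist B C) ^ 2 - 1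
  set y := k' * (d * hSide B C O)
  set x := k * (d * hSide B C O')
  have hm : 0 < m := sub_pos.mpr (one_lt_pow₀ hBC two_ne_zero)
  have hsq_sub' : y ^ 2 - x ^ 2 = d ^ 2 * m * k ^ 2 - d ^ 2 * m * k' ^ 2 := by
    linear_combination d ^ 2 * hsq_sub
  have hsq := pow_left_strictMonoOn₀ (M₀ := ℝ) two_ne_zero
  calc cmp (dist O' D) (dist O' C)
    _ = cmp (cosh (dist O' D)) k' := (cosh_strictMonoOn.cmp_map_eq dist_nonneg dist_nonneg).symm
    _ = cmp (m * k * cosh (dist O' D)) (m * k * k') :=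
      (cmp_mul_pos_left (by positivity) _ _).symm
    _ = cmp y x := cmp_eq_cmp_of_sub_eq_sub hsub.symm
    _ = cmp (y ^ 2) (x ^ 2) :=
      (hsq.cmp_map_eq (mul_nonneg hk'.le hO) (mul_nonneg hk.le hO')).symm
    _ = cmp (d ^ 2 * m * k ^ 2) (d ^ 2 * m * k' ^ 2) := cmp_eq_cmp_of_sub_eq_sub hsq_sub'
    _ = cmp (k ^ 2) (k' ^ 2) := cmp_mul_pos_left (by positivity) _ _
    _ = cmp k k' := hsq.cmp_map_eq hk.le hk'.le
    _ = cmp (dist O C) (dist O' C) := cosh_strictMonoOn.cmp_map_eq dist_nonneg dist_nonneg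

theorem cmp_dist_of_mem_hCone (hOB : dist O B = dist O C)
    (hOD : dist O D = dist O C) (hO'B : dist O' B = dist O' C)
    (hAD : 0 < hSide B C D * hSide B C A) (hO : O ∈ HCone C B D) (hO' : O' ∈ HCone B A C) :
    cmp (dist O' D) (dist O' C) = cmp (dist O C) (dist O' C) := by
  have hD : hSide B C D ≠ 0 := left_ne_zero_of_mul hAD.ne'
  have hBC : B ≠ C := ne_of_hSide_ne_zero hD
  rw [hCone_comm] at hO
  exact cmp_dist_of_dist_eq hOB hOD hO'B hD
    (dotProduct_mul_nonneg_of_mem_hCone hBC.symm (dot_cross_self _ _) (dot_self_cross _ _) hO)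
    (mul_nonneg_of_mul_pos_of_mul_nonneg hAD
      (dotProduct_mul_nonneg_of_mem_hCone hBC (dot_self_cross _ _) (dot_cross_self _ _) hO'))

end Side

section Polygon

open UpperHalfPlane

lemma subset_hConvexHull (S : Set ℍ) : S ⊆ HConvexHull S :=
  Set.subset_sInter fun _ hT => hT.2

lemma hConvexSet_hConvexHull (S : Set ℍ) : HConvexSet (HConvexHull S) :=
  fun _ ha _ hb _ hz T hT => hT.1 _ (ha T hT) _ (hb T hT) hz

/-- A family of points of the hyperbolic plane is in convex position if none of them lies in the
hyperbolic convex hull of the others. For the vertices of a simple polygon this says that the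
polygon is strictly convex. -/
def HConvexIndependent {ι : Type*} (V : ι → ℍ) : Prop :=
  ∀ i, V i ∉ HConvexHull (V '' {j | j ≠ i})

namespace HConvexIndependent

variable {ι : Type*} {V : ι → ℍ} {i j k l : ι}

lemma notMem_gSeg_of_mem_gSeg (hV : HConvexIndependent V) (hj : j ≠ i) (hk : k ≠ i) (hl : l ≠ i)
    {X : ℍ} (hX : X ∈ GSeg (V k) (V l)) : V i ∉ GSeg (V j) X := by
  have hmem {m : ι} (hm : m ≠ i) : V m ∈ HConvexHull (V '' {j | j ≠ i}) :=
    subset_hConvexHull _ (Set.mem_image_of_mem V hm)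
  have hconv := hConvexSet_hConvexHull (V '' {j | j ≠ i})
  exact fun h => hV i (hconv _ (hmem hj) _ (hconv _ (hmem hk) _ (hmem hl) hX) h)

lemma hSide_ne_zero (hV : HConvexIndependent V) (hij : i ≠ j) (hik : i ≠ k) (hjk : j ≠ k) :
    hSide (V i) (V j) (V k) ≠ 0 := by
  intro h
  rcases hCollinear_of_hSide_eq_zero h with h | h | h
  · exact hV.notMem_gSeg_of_mem_gSeg hik.symm hij.symm hij.symm (left_mem_gSeg _ _) h
  · exact hV.notMem_gSeg_of_mem_gSeg hik hjk hjk (left_mem_gSeg _ _) h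
  · exact hV.notMem_gSeg_of_mem_gSeg hij hjk.symm hjk.symm (left_mem_gSeg _ _) h

lemma hSide_mul_hSide_pos (hV : HConvexIndependent V) (hij : i ≠ j) (hki : k ≠ i) (hkj : k ≠ j)
    (hli : l ≠ i) (hlj : l ≠ j) (hdisj : Disjoint (GSeg (V i) (V j)) (GSeg (V k) (V l))) :
    0 < hSide (V i) (V j) (V k) * hSide (V i) (V j) (V l) := by
  by_contra! hle
  obtain ⟨X, hX, hX₀⟩ := exists_mem_gSeg_hSide_eq_zero hle
  rcases hCollinear_of_hSide_eq_zero hX₀ with h | h | h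
  · rw [gSeg_comm] at h
    exact hV.notMem_gSeg_of_mem_gSeg hij.symm hki hli hX h
  · exact Set.disjoint_left.mp hdisj h hX
  · exact hV.notMem_gSeg_of_mem_gSeg hij hkj hlj hX h

end HConvexIndependent

/-- A closed geodesic polygon with vertices `V i`, `i` modulo `n`, is simple if no two of its
non-adjacent edges meet. -/
def HSimplePolygon {n : ℕ} (V : ZMod n → ℍ) : Prop :=
  ∀ i j : ZMod n, j ≠ i → j ≠ i + 1 → j + 1 ≠ i →
    Disjoint (GSeg (V i) (V (i + 1))) (GSeg (V j) (V (j + 1)))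

namespace HSimplePolygon

variable {n : ℕ} {V : ZMod n → ℍ}

lemma hSide_mul_hSide_add_pos (hV : HSimplePolygon V) (hconvex : HConvexIndependent V) (i : ZMod n)
    {m : ℕ} (hm : m + 3 ≤ n) :
    0 < hSide (V i) (V (i + 1)) (V (i + 2)) * hSide (V i) (V (i + 1)) (V (i + 2 + m)) := by
  have hne (k : ℕ) (hk : 0 < k) (hkn : k < n) {x y : ZMod n} (hxy : x - y = k) : x ≠ y := by
    rintro rfl
    rw [sub_self, eq_comm, ZMod.natCast_eq_zero_iff] at hxy
    exact Nat.not_dvd_of_pos_of_lt hk hkn hxy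
  have h₁₀ : i + 1 ≠ i := hne 1 (by lia) (by lia) (by push_cast; ring)
  induction m with
  | zero =>
    have h₂₀ : i + 2 ≠ i := hne 2 (by lia) (by lia) (by push_cast; ring)
    have h₂₁ : i + 2 ≠ i + 1 := hne 1 (by lia) (by lia) (by push_cast; ring)
    rw [Nat.cast_zero, add_zero]
    exact mul_self_pos.mpr (hconvex.hSide_ne_zero h₁₀.symm h₂₀.symm h₂₁.symm)
  | succ m ih =>
    rw [Nat.cast_succ, ← add_assoc]
    set j := i + 2 + (m : ZMod n)
    have hj₀ : j ≠ i := hne (m + 2) (by lia) (by lia) (by push_cast; ring)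
    have hj₁ : j ≠ i + 1 := hne (m + 1) (by lia) (by lia) (by push_cast; ring)
    have hsucc₀ : j + 1 ≠ i := hne (m + 3) (by lia) (by lia) (by push_cast; ring)
    have hsucc₁ : j + 1 ≠ i + 1 := hne (m + 2) (by lia) (by lia) (by push_cast; ring)
    exact mul_pos_of_mul_pos_of_mul_pos (ih (by lia)) (hconvex.hSide_mul_hSide_pos h₁₀.symm
      hj₀ hj₁ hsucc₀ hsucc₁ (hV i j hj₀ hj₁ hsucc₀))

lemma hSide_succ_mul_hSide_pred_pos (hV : HSimplePolygon V) (hconvex : HConvexIndependent V)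
    (hn : 3 ≤ n) (i : ZMod n) :
    0 < hSide (V i) (V (i + 1)) (V (i + 2)) * hSide (V i) (V (i + 1)) (V (i - 1)) := by
  have h := hV.hSide_mul_hSide_add_pos hconvex i (m := n - 3) (by lia)
  rwa [Nat.cast_sub hn, CharP.cast_eq_zero, show i + 2 + (0 - (3 : ℕ)) = i - 1 by push_cast; ring]
    at h

end HSimplePolygon

end Polygon

theorem stmt13_general {n : ℕ} (hn : 3 ≤ n)
    (V O : ZMod n → UpperHalfPlane) (R : ZMod n → ℝ)
    (hsimple : HSimplePolygon V)
    (hcirc : ∀ i : ZMod n, dist (O i) (V (i - 1)) = R i ∧ dist (O i) (V i) = R i ∧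
      dist (O i) (V (i + 1)) = R i)
    (hconvex : HConvexIndependent V)
    (hcoh : ∀ i : ZMod n, O i ∈ HCone (V i) (V (i - 1)) (V (i + 1))) :
    ∀ i : ZMod n,
      (dist (O (i - 1)) (V (i + 1)) < R (i - 1) ↔ R i < R (i - 1)) ∧
      (R (i - 1) < dist (O (i - 1)) (V (i + 1)) ↔ R (i - 1) < R i) := by
  intro i
  have hside := hsimple.hSide_succ_mul_hSide_pred_pos hconvex hn (i - 1)
  rw [sub_add_cancel, show i - 1 + 2 = i + 1 by ring] at hside
  obtain ⟨hOB, hOC, hOD⟩ := hcirc i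
  obtain ⟨-, hO'B, hO'C⟩ := hcirc (i - 1)
  have hO' := hcoh (i - 1)
  rw [sub_add_cancel] at hO'C hO'
  have hcmp := cmp_dist_of_mem_hCone (hOB.trans hOC.symm) (hOD.trans hOC.symm)
    (hO'B.trans hO'C.symm) hside (hcoh i) hO'
  rw [hO'C, hOC] at hcmp
  exact ⟨lt_iff_lt_of_cmp_eq_cmp hcmp, lt_iff_lt_of_cmp_eq_cmp (cmp_eq_cmp_symm.mp hcmp)⟩

/-- For a convex generic coherent hyperbolic polygon: `V (i+1)` lies strictly inside the
circumcircle `C (i-1)` iff `R (i-1) > R i`, and strictly outside iff `R (i-1) < R i`. -/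
theorem stmt13 {n : ℕ} [NeZero n] (hn : 4 ≤ n)
    (V O : ZMod n → UpperHalfPlane) (R : ZMod n → ℝ)
    (hinj : Function.Injective V)
    (hsimple : ∀ i j : ZMod n, j ≠ i → j ≠ i + 1 → j + 1 ≠ i →
      Disjoint (GSeg (V i) (V (i + 1))) (GSeg (V j) (V (j + 1))))
    (hadj : ∀ i : ZMod n,
      GSeg (V i) (V (i + 1)) ∩ GSeg (V (i + 1)) (V (i + 2)) = {V (i + 1)})
    (hcirc : ∀ i : ZMod n, dist (O i) (V (i - 1)) = R i ∧ dist (O i) (V i) = R i ∧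
      dist (O i) (V (i + 1)) = R i)
    (hRpos : ∀ i, 0 < R i)
    (hgen4 : ¬∃ (c : UpperHalfPlane) (r : ℝ) (i j k l : ZMod n),
      i ≠ j ∧ i ≠ k ∧ i ≠ l ∧ j ≠ k ∧ j ≠ l ∧ k ≠ l ∧
      dist c (V i) = r ∧ dist c (V j) = r ∧ dist c (V k) = r ∧ dist c (V l) = r)
    (hgen3 : ∀ i j k : ZMod n, i ≠ j → i ≠ k → j ≠ k →
      ¬HCollinear (V i) (V j) (V k))
    (hconvex : ∀ i : ZMod n, V i ∉ HConvexHull (V '' {j | j ≠ i}))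
    (hcoh : ∀ i : ZMod n, O i ∈ HCone (V i) (V (i - 1)) (V (i + 1))) :
    ∀ i : ZMod n,
      (dist (O (i - 1)) (V (i + 1)) < R (i - 1) ↔ R i < R (i - 1)) ∧
      (R (i - 1) < dist (O (i - 1)) (V (i + 1)) ↔ R (i - 1) < R i) :=
  stmt13_general (by lia) V O R hsimple hcirc hconvex hcoh
end
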